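/- arXiv:2303.10569 — 5 statements merged into one kernel-verified Lean document; each statement's English description precedes it below -/
import Mathlib

section
/- Let N: S² → ℝ be continuous, let r > t > 0, ω ∈ S², x = rω, and z₀ = (1 − (t/r)²)^{1/2}. Then σ ↦ N(σ)·(⟨ω,σ⟩² − z₀²)^{−1/2} is integrable on {σ ∈ S²: ⟨ω,σ⟩ > z₀}, and (1/(4πt)) ∫_{\{y ∈ ℝ³: |y−x| = t\}} N(y/|y|)·|y|^{−2} dS(y) = (1/(2πr)) ∫_{\{σ ∈ S²: ⟨ω,σ⟩ > z₀\}} N(σ)·(⟨ω,σ⟩² − z₀²)^{−1/2} dS(σ), where the left-hand integral is with respect to the surface measure on the sphere of radius t centered at x. -/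
/-!
The central projection `y ↦ y / |y|` maps the sphere `{|y - x| = t}` onto the cap
`{⟪ω, σ⟫ ≥ z0}`; it is two-to-one over the open cap, because a ray in an interior direction meets
the sphere in a near and a far point.

To avoid surface Jacobians, everything is extended to `ℝ³` by homogeneity. The map
`coneMap t x p = t p + |p| x` is homogeneous of degree one and sends a unit vector `σ` to the
point `x + t σ` of the sphere. Its derivative is `t` times a transvection, so its Jacobian is
`t² (t + r ⟪ω, p⟫ / |p|)` (`det_coneMapDeriv`). The zero set of the Jacobian is null
(`measure_equality_cone`), and on each of the two half domains where the Jacobian has a fixed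
sign, `coneMap` is a bijection onto the cone `{y | z0 |y| < ⟪ω, y⟫}`
(`injOn_coneMap`, `image_coneMap`), the preimages being given by the two roots of a quadratic
equation for `|p|`.

The identity `jacobian_mul_density` shows that the Jacobian times the density
`(⟪ω, θ⟫² - z0²)^(-1/2)` at `θ = (x + t u) / |x + t u|` is `t r |x + t u|`. Integrating over the
part of the cone inside the unit ball, whose preimage in the direction `u` is
`|p| < |x + t u|⁻¹`, and using polar coordinates on both sides (`lintegral_radial`) gives the
formula for nonnegative integrands (`lintegral_kirchhoff`). This is an equality between the
push-forward of the measure `t r |x + t σ|⁻² dS` under the projection and twice the measure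
`(⟪ω, σ⟫² - z0²)^(-1/2) dS` on the cap. The former is finite, since its density is continuous
on a compact set, and this yields both the integrability and the identity for continuous `N`.
-/

noncomputable section

open MeasureTheory Real Set Filter Topology Metric
open scoped RealInnerProductSpace Classical

/-- ℝ³ as a Euclidean space. -/
abbrev E3 : Type := EuclideanSpace ℝ (Fin 3)

/-- The unit sphere S² in ℝ³. -/
abbrev S2 : Set E3 := Metric.sphere (0 : E3) 1

/-- The surface measure on the unit sphere (total mass 4π). -/
noncomputable def sphereMeasure : Measure (Metric.sphere (0 : E3) 1) :=
  (volume : Measure E3).toSphere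

/-- Integral over the unit sphere with respect to the surface measure. -/
noncomputable def sphereIntegral (f : E3 → ℝ) : ℝ :=
  ∫ σ : Metric.sphere (0 : E3) 1, f σ ∂sphereMeasure

/-- Japanese bracket ⟨q⟩ = √(1+q²). -/
noncomputable def jb (q : ℝ) : ℝ := Real.sqrt (1 + q ^ 2)

/-- Iterates of the operator g ↦ ⟨q⟩ ∂_q g. -/
noncomputable def qIter : ℕ → (ℝ → ℝ) → ℝ → ℝ
  | 0, g => g
  | k + 1, g => fun q => jb q * deriv (qIter k g) q

/-- Partial derivative in the i-th coordinate direction. -/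
noncomputable def pd (i : Fin 3) (g : E3 → ℝ) : E3 → ℝ :=
  fun x => fderiv ℝ g x (EuclideanSpace.single i 1)

/-- Iterated partial derivatives along a multi-index (list of directions). -/
noncomputable def pdMulti : List (Fin 3) → (E3 → ℝ) → E3 → ℝ
  | [], g => g
  | i :: l, g => pd i (pdMulti l g)

/-- Euclidean Laplacian in ℝ³. -/
noncomputable def lap3 (g : E3 → ℝ) (x : E3) : ℝ :=
  ∑ i : Fin 3, pd i (pd i g) x

/-- Second time derivative ∂ₜ²φ. -/
noncomputable def dt2 (φ : ℝ → E3 → ℝ) (t : ℝ) (x : E3) : ℝ :=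
  deriv (fun s => deriv (fun u => φ u x) s) t

/-- Homogeneity of degree zero on ℝ³ ∖ {0}. -/
def HomogZero (f : E3 → ℝ) : Prop := ∀ c : ℝ, 0 < c → ∀ x : E3, f (c • x) = f x

/-- A smooth function on S², represented by its degree-zero homogeneous extension. -/
def SmoothOnSphere (f : E3 → ℝ) : Prop :=
  HomogZero f ∧ ContDiffOn ℝ (⊤ : ℕ∞) f {x : E3 | x ≠ 0}

/-- A smooth function on ℝ×S², represented via degree-zero homogeneous extension
in the angular variable. -/
def SmoothQSphere (f : ℝ → E3 → ℝ) : Prop :=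
  (∀ q, HomogZero (f q)) ∧
  ContDiffOn ℝ (⊤ : ℕ∞) (fun p : ℝ × E3 => f p.1 p.2) {p : ℝ × E3 | p.2 ≠ 0}

/-- Symbol decay of order κ: |(⟨q⟩∂_q)^k ∂_ω^α f(q,ω)| ≤ C_{k,α} ⟨q⟩^{-κ}. -/
def SymbolDecay (κ : ℝ) (f : ℝ → E3 → ℝ) : Prop :=
  ∀ (k : ℕ) (α : List (Fin 3)), ∃ C : ℝ, ∀ (q : ℝ) (ω : E3), ‖ω‖ = 1 →
    |qIter k (fun s => pdMulti α (f s) ω) q| ≤ C * jb q ^ (-κ)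

/-- A smooth cutoff χ with χ = 1 on (-∞, 1/4] and χ = 0 on [1/2, ∞), 0 ≤ χ ≤ 1. -/
def IsCutChi (χ : ℝ → ℝ) : Prop :=
  ContDiff ℝ (⊤ : ℕ∞) χ ∧ (∀ s, χ s ∈ Set.Icc (0:ℝ) 1) ∧
  (∀ s, s ≤ (1/4 : ℝ) → χ s = 1) ∧ (∀ s, (1/2 : ℝ) ≤ s → χ s = 0)

/-- A smooth cutoff χ_{q<0} with χ = 1 on (-∞, -1] and χ = 0 on [0, ∞), 0 ≤ χ ≤ 1. -/
def IsCutNeg (χ : ℝ → ℝ) : Prop :=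
  ContDiff ℝ (⊤ : ℕ∞) χ ∧ (∀ s, χ s ∈ Set.Icc (0:ℝ) 1) ∧
  (∀ s, s ≤ (-1 : ℝ) → χ s = 1) ∧ (∀ s, (0 : ℝ) ≤ s → χ s = 0)


/-- Polar coordinates over the star-shaped region `|y| < a (y / |y|)`, for an integrand depending
only on the direction. -/
lemma lintegral_radial (K : E3 → ENNReal) (hK : Measurable K) (a : E3 → ℝ)
    (ha : Measurable a) (hapos : ∀ u, ‖u‖ = 1 → 0 < a u) :
    ∫⁻ y : E3, (if ‖y‖ < a (‖y‖⁻¹ • y) then K (‖y‖⁻¹ • y) else 0) =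
      ∫⁻ σ : Metric.sphere (0 : E3) 1, K σ * ENNReal.ofReal (a σ ^ 3 / 3) ∂sphereMeasure := by
  have hmp := (volume : Measure E3).measurePreserving_homeomorphUnitSphereProd
  have hdim : Module.finrank ℝ E3 - 1 = 2 := by simp
  rw [hdim] at hmp
  let g : Metric.sphere (0 : E3) 1 × Ioi (0 : ℝ) → ENNReal :=
    fun q => if (q.2 : ℝ) < a q.1 then K q.1 else 0
  have hg : Measurable g := by
    refine Measurable.ite (measurableSet_lt ?_ ?_) ?_ measurable_const
    · exact measurable_subtype_coe.comp measurable_snd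
    · exact ha.comp (measurable_subtype_coe.comp measurable_fst)
    · exact hK.comp (measurable_subtype_coe.comp measurable_fst)
  have h0 : MeasurableSet ({0}ᶜ : Set E3) := (measurableSet_singleton _).compl
  calc ∫⁻ y : E3, (if ‖y‖ < a (‖y‖⁻¹ • y) then K (‖y‖⁻¹ • y) else 0)
      = ∫⁻ y : ({0}ᶜ : Set E3), (if ‖(y : E3)‖ < a (‖(y : E3)‖⁻¹ • (y : E3)) then
          K (‖(y : E3)‖⁻¹ • (y : E3)) else 0) ∂(volume.comap Subtype.val) := by
        rw [lintegral_subtype_comap h0 (fun y : E3 =>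
          if ‖y‖ < a (‖y‖⁻¹ • y) then K (‖y‖⁻¹ • y) else 0), restrict_compl_singleton]
    _ = ∫⁻ y : ({0}ᶜ : Set E3), g (homeomorphUnitSphereProd E3 y) ∂(volume.comap Subtype.val) := by
        simp [g]
    _ = ∫⁻ q, g q ∂(sphereMeasure.prod (Measure.volumeIoiPow 2)) :=
        hmp.lintegral_comp_emb (Homeomorph.measurableEmbedding _) g
    _ = ∫⁻ σ : Metric.sphere (0 : E3) 1, ∫⁻ ρ, g (σ, ρ) ∂(Measure.volumeIoiPow 2)
          ∂sphereMeasure := lintegral_prod _ hg.aemeasurable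
    _ = _ := by
        refine lintegral_congr fun σ => ?_
        have hσ : ‖(σ : E3)‖ = 1 := by simp
        have := Measure.volumeIoiPow_apply_Iio 2 ⟨a σ, hapos _ hσ⟩
        have e : (fun ρ : Ioi (0 : ℝ) => g (σ, ρ)) =
            (Iio (⟨a σ, hapos _ hσ⟩ : Ioi (0 : ℝ))).indicator (fun _ => K σ) := by
          ext ρ
          simp only [g, indicator, mem_Iio, ← Subtype.coe_lt_coe]
        rw [e, lintegral_indicator measurableSet_Iio, setLIntegral_const, this]
        norm_num

/-- The set is contained in the frontier of the convex cone `{t ‖p‖ + r ⟪ω, p⟫ ≤ 0}`: as `t < r`,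
moving a point of it in the direction `ω` leaves the cone. Frontiers of convex sets are null. -/
lemma measure_equality_cone (t r : ℝ) (ht : 0 < t) (htr : t < r) (ω : E3) (hω : ‖ω‖ = 1) :
    volume {p : E3 | t * ‖p‖ + r * ⟪ω, p⟫ = 0} = 0 := by
  have hconv : Convex ℝ {p : E3 | t * ‖p‖ + r * ⟪ω, p⟫ ≤ 0} := by
    intro p hp q hq a b ha hb hab
    simp only [mem_ofPred_eq] at *
    have h1 : ‖a • p + b • q‖ ≤ a * ‖p‖ + b * ‖q‖ := by
      refine (norm_add_le _ _).trans ?_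
      simp [norm_smul, abs_of_nonneg ha, abs_of_nonneg hb]
    rw [inner_add_right, inner_smul_right, inner_smul_right]
    nlinarith [mul_le_mul_of_nonneg_left h1 ht.le, mul_nonpos_of_nonneg_of_nonpos ha hp,
      mul_nonpos_of_nonneg_of_nonpos hb hq]
  refine measure_mono_null ?_ (hconv.addHaar_frontier volume)
  intro p hp
  simp only [mem_ofPred_eq] at hp
  refine ⟨subset_closure hp.le, fun hint => ?_⟩
  have hcont : Tendsto (fun e : ℝ => p + e • ω) (𝓝[>] 0) (𝓝 p) := by
    have : Tendsto (fun e : ℝ => p + e • ω) (𝓝 0) (𝓝 (p + (0 : ℝ) • ω)) :=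
      Continuous.tendsto (by fun_prop) 0
    simp only [zero_smul, add_zero] at this
    exact this.mono_left nhdsWithin_le_nhds
  obtain ⟨e, he, hepos⟩ := ((hcont.eventually (mem_interior_iff_mem_nhds.1 hint)).and
    self_mem_nhdsWithin).exists
  replace he : t * ‖p + e • ω‖ + r * ⟪ω, p + e • ω⟫ ≤ 0 := he
  replace hepos : 0 < e := hepos
  have h1 : ‖p‖ ≤ ‖p + e • ω‖ + e := by
    have := norm_sub_le (p + e • ω) (e • ω)
    simpa [norm_smul, hω, abs_of_pos hepos] using this
  rw [inner_add_right, inner_smul_right, real_inner_self_eq_norm_sq, hω] at he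
  nlinarith [mul_le_mul_of_nonneg_left h1 ht.le, mul_pos (sub_pos.2 htr) hepos]

/-- The positively homogeneous extension to `ℝ³` of the parametrisation `σ ↦ x + t σ` of the
sphere of radius `t` around `x`. -/
def coneMap (t : ℝ) (x : E3) (p : E3) : E3 := t • p + ‖p‖ • x

/-- The derivative of `coneMap t x` at `p ≠ 0`. -/
def coneMapDeriv (t : ℝ) (x : E3) (p : E3) : E3 →L[ℝ] E3 :=
  t • ContinuousLinearMap.id ℝ E3 + (‖p‖⁻¹ • innerSL ℝ p).smulRight x

lemma hasFDerivAt_coneMap (t : ℝ) (x p : E3) (hp : p ≠ 0) :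
    HasFDerivAt (coneMap t x) (coneMapDeriv t x p) p := by
  have hn : HasFDerivAt (fun y : E3 => ‖y‖) (‖p‖⁻¹ • innerSL ℝ p) p := by
    have h := (hasStrictFDerivAt_norm_sq p).hasFDerivAt.sqrt (by simpa using hp)
    simp only [norm_nonneg, Real.sqrt_sq] at h
    have e : (1 / (2 * ‖p‖)) • (2 • innerSL ℝ p) = ‖p‖⁻¹ • innerSL ℝ p := by
      rw [two_nsmul, ← two_smul ℝ, smul_smul]
      congr 1
      field_simp
    rwa [e] at h
  exact ((hasFDerivAt_id p).const_smul t).add (hn.smul_const x)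

/-- For `p = 0` the junk value `‖0‖⁻¹ = 0` makes both sides `t ^ 3`. -/
lemma det_coneMapDeriv (t : ℝ) (ht : t ≠ 0) (x p : E3) :
    (coneMapDeriv t x p).det = t ^ 2 * (t + ‖p‖⁻¹ * ⟪p, x⟫) := by
  have h : (coneMapDeriv t x p : E3 →ₗ[ℝ] E3) =
      t • LinearMap.transvection ((t⁻¹ * ‖p‖⁻¹) • (innerSL ℝ p : E3 →ₗ[ℝ] ℝ)) x := by
    ext1 v
    simp [coneMapDeriv, LinearMap.transvection.apply, smul_smul]
    congr 1
    field_simp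
  rw [ContinuousLinearMap.det, h, LinearMap.det_smul, LinearMap.transvection.det]
  simp
  field_simp

lemma norm_coneMap_sq (t r : ℝ) (ω : E3) (hω : ‖ω‖ = 1) (p : E3) :
    ‖coneMap t (r • ω) p‖ ^ 2 = (t ^ 2 + r ^ 2) * ‖p‖ ^ 2 + 2 * t * r * ‖p‖ * ⟪ω, p⟫ := by
  rw [coneMap, norm_add_sq_real]
  simp only [norm_smul, inner_smul_left, inner_smul_right, hω, real_inner_comm p ω, mul_pow]
  simp
  ring

lemma inner_coneMap (t r : ℝ) (ω : E3) (hω : ‖ω‖ = 1) (p : E3) :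
    ⟪ω, coneMap t (r • ω) p⟫ = t * ⟪ω, p⟫ + r * ‖p‖ := by
  rw [coneMap, inner_add_right, inner_smul_right, inner_smul_right, inner_smul_right,
    real_inner_self_eq_norm_sq, hω]
  ring

/-- For `e = 1` or `e = -1`, the set of `p` where the Jacobian of `coneMap t (r • ω)` has sign `e`.
After restriction to the unit sphere, `e = 1` is the far side and `e = -1` the near side of the
sphere around `r • ω`, as seen from the origin. -/
def halfDomain (t r : ℝ) (ω : E3) (e : ℝ) : Set E3 := {p | 0 < e * (t * ‖p‖ + r * ⟪ω, p⟫)}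

lemma ne_zero_of_mem {t r : ℝ} {ω : E3} {e : ℝ} {p : E3} (hp : p ∈ halfDomain t r ω e) :
    p ≠ 0 := by
  rintro rfl
  simp [halfDomain] at hp

/-- Two points with the same image `y` have norms solving the same quadratic equation, and the
sign condition puts both norms on the same side of its vertex. -/
lemma injOn_coneMap (t r : ℝ) (ht : 0 < t) (ω : E3) (hω : ‖ω‖ = 1) (e : ℝ) : InjOn (coneMap t (r • ω)) (halfDomain t r ω e) := by
  intro p hp q hq hpq
  have hn : ‖p‖ = ‖q‖ := by
    have h1 := norm_coneMap_sq t r ω hω p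
    have h2 := norm_coneMap_sq t r ω hω q
    have h3 := inner_coneMap t r ω hω p
    have h4 := inner_coneMap t r ω hω q
    rw [hpq] at h1 h3
    simp only [halfDomain, mem_ofPred_eq] at hp hq
    set b := ⟪ω, coneMap t (r • ω) q⟫
    have hA : (‖p‖ - ‖q‖) * ((r ^ 2 - t ^ 2) * (‖p‖ + ‖q‖) - 2 * r * b) = 0 := by
      have e1 : t * ⟪ω, p⟫ = b - r * ‖p‖ := by linarith
      have e2 : t * ⟪ω, q⟫ = b - r * ‖q‖ := by linarith
      linear_combination h1 - h2 + 2 * r * ‖p‖ * e1 - 2 * r * ‖q‖ * e2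
    rcases mul_eq_zero.1 hA with h | h
    · linarith
    · exfalso
      have key : t * (e * (t * ‖p‖ + r * ⟪ω, p⟫) + e * (t * ‖q‖ + r * ⟪ω, q⟫)) = 0 := by
        linear_combination (-e) * h - e * r * h3 - e * r * h4
      have := mul_pos ht (add_pos hp hq)
      linarith
  have : t • p = t • q := by
    have h := hpq
    simp only [coneMap, hn] at h
    exact add_right_cancel h
  exact smul_right_injective _ ht.ne' this

/-- Solving `coneMap t (r • ω) p = y` amounts to finding a root `s = ‖p‖` of
`(r² - t²) s² - 2 r ⟪ω, y⟫ s + ‖y‖² = 0`; its discriminant is positive exactly when `y` lies in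
the double cone `z0 ‖y‖ < |⟪ω, y⟫|`, and `e` selects the root. -/
lemma image_coneMap (t r : ℝ) (ht : 0 < t) (htr : t < r) (ω : E3) (hω : ‖ω‖ = 1) (e : ℝ)
    (he : e = 1 ∨ e = -1) (z0 : ℝ) (hz : 0 ≤ z0) (hz2 : r ^ 2 * z0 ^ 2 = r ^ 2 - t ^ 2) :
    coneMap t (r • ω) '' halfDomain t r ω e = {y | z0 * ‖y‖ < ⟪ω, y⟫} := by
  have hr : 0 < r := ht.trans htr
  have hA : 0 < r ^ 2 - t ^ 2 := by nlinarith
  have hee : e * e = 1 := by rcases he with rfl | rfl <;> norm_num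
  ext y
  constructor
  · rintro ⟨p, hp, rfl⟩
    have hp0 : 0 < ‖p‖ := norm_pos_iff.2 (ne_zero_of_mem hp)
    have h1 := norm_coneMap_sq t r ω hω p
    have h3 := inner_coneMap t r ω hω p
    have hip : |⟪ω, p⟫| ≤ ‖p‖ := by simpa [hω] using abs_real_inner_le_norm ω p
    have hb : 0 < ⟪ω, coneMap t (r • ω) p⟫ := by
      rw [h3]
      nlinarith [(abs_le.1 hip).1, mul_pos (sub_pos.2 htr) hp0]
    have hne : t * ‖p‖ + r * ⟪ω, p⟫ ≠ 0 := by
      intro h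
      simp [halfDomain, h] at hp
    have hsq : 0 < t ^ 2 * (t * ‖p‖ + r * ⟪ω, p⟫) ^ 2 := by positivity
    have hd : r ^ 2 * (z0 * ‖coneMap t (r • ω) p‖) ^ 2 <
        r ^ 2 * ⟪ω, coneMap t (r • ω) p⟫ ^ 2 := by
      rw [mul_pow, h1, h3, ← mul_assoc, hz2]
      nlinarith
    have := lt_of_mul_lt_mul_left hd (by positivity)
    exact lt_of_pow_lt_pow_left₀ 2 hb.le this
  · intro hy
    simp only [mem_ofPred_eq] at hy
    have hy0 : y ≠ 0 := by
      rintro rfl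
      simp at hy
    have hyn : 0 < ‖y‖ := norm_pos_iff.2 hy0
    set b := r * ⟪ω, y⟫ with hbdef
    set A := r ^ 2 - t ^ 2 with hAdef
    have hb : 0 < b := mul_pos hr (lt_of_le_of_lt (by positivity) hy)
    have hdisc : 0 < b ^ 2 - A * ‖y‖ ^ 2 := by
      have : (z0 * ‖y‖) ^ 2 < ⟪ω, y⟫ ^ 2 := pow_lt_pow_left₀ hy (by positivity) two_ne_zero
      rw [hbdef, ← hz2]
      nlinarith [mul_lt_mul_of_pos_left this (pow_pos hr 2)]
    set d := √(b ^ 2 - A * ‖y‖ ^ 2) with hd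
    have hd0 : 0 < d := Real.sqrt_pos.2 hdisc
    have hd2 : d ^ 2 = b ^ 2 - A * ‖y‖ ^ 2 := Real.sq_sqrt hdisc.le
    have hdb : d < b := by
      refine lt_of_pow_lt_pow_left₀ 2 hb.le ?_
      have : 0 < A * ‖y‖ ^ 2 := by positivity
      linarith
    -- The smaller root belongs to `e = 1`, the larger one to `e = -1`.
    set s := (b - e * d) / A with hs
    have hsA : s * A = b - e * d := by rw [hs]; field_simp
    have hs0 : 0 < s := by
      refine div_pos ?_ hA
      rcases he with rfl | rfl <;> linarith
    have hquad : A * s ^ 2 - 2 * b * s + ‖y‖ ^ 2 = 0 := by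
      have : A * (A * s ^ 2 - 2 * b * s + ‖y‖ ^ 2) = 0 := by
        linear_combination (s * A - b - e * d) * hsA + e * e * hd2 + (b ^ 2 - A * ‖y‖ ^ 2) * hee
      exact (mul_eq_zero.1 this).resolve_left hA.ne'
    have hnp : ‖t⁻¹ • (y - s • r • ω)‖ = s := by
      have : ‖t⁻¹ • (y - s • r • ω)‖ ^ 2 = s ^ 2 := by
        rw [norm_smul, mul_pow, norm_sub_sq_real]
        simp only [norm_smul, inner_smul_right, hω, real_inner_comm ω y, mul_pow]
        simp only [norm_inv, Real.norm_eq_abs, inv_pow, sq_abs]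
        field_simp
        linear_combination hquad
      exact (pow_left_inj₀ (norm_nonneg _) hs0.le two_ne_zero).1 this
    have hp : coneMap t (r • ω) (t⁻¹ • (y - s • r • ω)) = y := by
      rw [coneMap, hnp, smul_smul, mul_inv_cancel₀ ht.ne', one_smul, sub_add_cancel]
    refine ⟨t⁻¹ • (y - s • r • ω), ?_, hp⟩
    have h3 := inner_coneMap t r ω hω (t⁻¹ • (y - s • r • ω))
    rw [hp, hnp] at h3
    simp only [halfDomain, mem_ofPred_eq, hnp]
    have : t * (e * (t * s + r * ⟪ω, t⁻¹ • (y - s • r • ω)⟫)) = d := by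
      linear_combination (-e) * r * h3 - e * hsA + d * hee
    exact pos_of_mul_pos_right (this ▸ hd0) ht.le

lemma norm_add_smul_sq (t r : ℝ) (ω : E3) (hω : ‖ω‖ = 1) (u : E3) (hu : ‖u‖ = 1) :
    ‖r • ω + t • u‖ ^ 2 = t ^ 2 + r ^ 2 + 2 * t * r * ⟪ω, u⟫ := by
  have h := norm_coneMap_sq t r ω hω u
  simp only [coneMap, hu, one_smul] at h
  rw [add_comm, h]
  ring

lemma norm_add_smul_pos (t r : ℝ) (ht : 0 < t) (htr : t < r) (ω : E3) (hω : ‖ω‖ = 1) (u : E3)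
    (hu : ‖u‖ = 1) : 0 < ‖r • ω + t • u‖ := by
  have h := norm_add_smul_sq t r ω hω u hu
  have hip : |⟪ω, u⟫| ≤ 1 := by simpa [hω, hu] using abs_real_inner_le_norm ω u
  have : 0 < ‖r • ω + t • u‖ ^ 2 := by
    rw [h]
    nlinarith [(abs_le.1 hip).1, mul_pos (sub_pos.2 htr) (sub_pos.2 htr), mul_pos ht (ht.trans htr)]
  exact (norm_nonneg _).lt_of_ne' fun h0 => by simp [h0] at this

/-- The Jacobian of `coneMap` cancels the singularity of the density at the boundary of the cap,
because `|x + t u|² r² (c² - z0²) = t² (t + r ⟪ω, u⟫)²` with `c` the cosine of the angle between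
`ω` and `x + t u`. -/
lemma jacobian_mul_density (t r : ℝ) (ht : 0 < t) (htr : t < r) (ω : E3) (hω : ‖ω‖ = 1)
    (z0 : ℝ) (hz2 : r ^ 2 * z0 ^ 2 = r ^ 2 - t ^ 2) (u : E3) (hu : ‖u‖ = 1)
    (hne : t + r * ⟪ω, u⟫ ≠ 0) :
    |t ^ 2 * (t + r * ⟪ω, u⟫)| *
      (√(⟪ω, ‖r • ω + t • u‖⁻¹ • (r • ω + t • u)⟫ ^ 2 - z0 ^ 2))⁻¹ =
      t * r * ‖r • ω + t • u‖ := by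
  have hr : 0 < r := ht.trans htr
  have hm := norm_add_smul_pos t r ht htr ω hω u hu
  have hm2 := norm_add_smul_sq t r ω hω u hu
  set m := ‖r • ω + t • u‖
  set z := ⟪ω, u⟫
  have hc : ⟪ω, m⁻¹ • (r • ω + t • u)⟫ = m⁻¹ * (r + t * z) := by
    rw [inner_smul_right, inner_add_right, inner_smul_right, inner_smul_right,
      real_inner_self_eq_norm_sq, hω]
    simp [z]
  have hs : √((m⁻¹ * (r + t * z)) ^ 2 - z0 ^ 2) = t * |t + r * z| / (m * r) := by
    rw [← Real.sqrt_sq (show 0 ≤ t * |t + r * z| / (m * r) by positivity)]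
    congr 1
    rw [div_pow, mul_pow, mul_pow, mul_pow, sq_abs]
    field_simp
    linear_combination (-m ^ 2) * hz2 - (r ^ 2 - t ^ 2) * hm2
  have habs : 0 < |t + r * z| := abs_pos.2 hne
  rw [hc, hs, abs_mul, abs_of_pos (pow_pos ht 2)]
  field_simp

/-- The formula for nonnegative measurable integrands, in which no integrability is needed. -/
lemma lintegral_kirchhoff (t r : ℝ) (ht : 0 < t) (htr : t < r) (ω : E3) (hω : ‖ω‖ = 1)
    (z0 : ℝ) (hz : 0 ≤ z0) (hz2 : r ^ 2 * z0 ^ 2 = r ^ 2 - t ^ 2)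
    (G : E3 → ENNReal) (hG : Measurable G) :
    ∫⁻ σ : Metric.sphere (0 : E3) 1, G (‖r • ω + t • (σ : E3)‖⁻¹ • (r • ω + t • (σ : E3))) *
        ENNReal.ofReal (t * r / ‖r • ω + t • (σ : E3)‖ ^ 2) ∂sphereMeasure =
      2 * ∫⁻ σ : Metric.sphere (0 : E3) 1 in {σ | z0 < ⟪ω, (σ : E3)⟫},
        G σ * ENNReal.ofReal (√(⟪ω, (σ : E3)⟫ ^ 2 - z0 ^ 2))⁻¹ ∂sphereMeasure := by
  let K : E3 → ENNReal := {θ | z0 < ⟪ω, θ⟫}.indicator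
    fun θ => G θ * ENNReal.ofReal (√(⟪ω, θ⟫ ^ 2 - z0 ^ 2))⁻¹
  have hinner : Measurable fun θ : E3 => ⟪ω, θ⟫ :=
    (show Continuous fun θ : E3 => ⟪ω, θ⟫ by fun_prop).measurable
  have hcone : MeasurableSet {θ : E3 | z0 < ⟪ω, θ⟫} := measurableSet_lt measurable_const hinner
  have hK : Measurable K :=
    (hG.mul (((hinner.pow_const 2).sub_const _).sqrt.inv.ennreal_ofReal)).indicator hcone
  let L : E3 → ENNReal := fun u => G (‖r • ω + t • u‖⁻¹ • (r • ω + t • u)) *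
    ENNReal.ofReal (t * r * ‖r • ω + t • u‖)
  have hm : Measurable fun u : E3 => ‖r • ω + t • u‖ :=
    (show Continuous fun u : E3 => ‖r • ω + t • u‖ by fun_prop).measurable
  have hv : Measurable fun u : E3 => r • ω + t • u :=
    (show Continuous fun u : E3 => r • ω + t • u by fun_prop).measurable
  have hL : Measurable L :=
    (hG.comp (hm.inv.smul hv)).mul ((hm.const_mul _).ennreal_ofReal)
  let F : E3 → ENNReal := fun y => if ‖y‖ < 1 then K (‖y‖⁻¹ • y) else 0
  let H : E3 → ENNReal := fun p =>
    if ‖p‖ < ‖r • ω + t • (‖p‖⁻¹ • p)‖⁻¹ then L (‖p‖⁻¹ • p) else 0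
  have hF := lintegral_radial K hK (fun _ => 1) measurable_const (fun _ _ => one_pos)
  have hH := lintegral_radial L hL (fun u => ‖r • ω + t • u‖⁻¹) hm.inv
    (fun u hu => inv_pos.2 (norm_add_smul_pos t r ht htr ω hω u hu))
  have hdom : ∀ e : ℝ, MeasurableSet (halfDomain t r ω e) := fun e =>
    measurableSet_lt measurable_const
      (show Continuous fun p : E3 => e * (t * ‖p‖ + r * ⟪ω, p⟫) by fun_prop).measurable
  -- `coneMap` turns the integral of `F`, which vanishes off the cone, into one over either half
  -- domain, where the singular factor of `F` is absorbed by the Jacobian.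
  have hchange : ∀ e : ℝ, (e = 1 ∨ e = -1) → ∫⁻ y, F y = ∫⁻ p in halfDomain t r ω e, H p := by
    intro e he
    have h1 : ∫⁻ y, F y = ∫⁻ y in coneMap t (r • ω) '' halfDomain t r ω e, F y := by
      refine (setLIntegral_eq_of_support_subset ?_).symm
      intro y hy
      rw [image_coneMap t r ht htr ω hω e he z0 hz hz2]
      -- At `y = 0` the direction `‖y‖⁻¹ • y` is `0`, which is outside the cap since `0 ≤ z0`.
      have hK0 : K (‖y‖⁻¹ • y) ≠ 0 := by
        intro h
        simp [F, h] at hy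
      have hmem : z0 < ⟪ω, ‖y‖⁻¹ • y⟫ := mem_of_indicator_ne_zero (s := {θ : E3 | z0 < ⟪ω, θ⟫}) hK0
      have hy0 : y ≠ 0 := by
        rintro rfl
        simp at hmem
        linarith
      have hyn : 0 < ‖y‖ := norm_pos_iff.2 hy0
      rw [inner_smul_right, inv_mul_eq_div, lt_div_iff₀ hyn] at hmem
      exact hmem
    rw [h1, lintegral_image_eq_lintegral_abs_det_fderiv_mul volume (hdom e)
      (fun p hp => (hasFDerivAt_coneMap t (r • ω) p (ne_zero_of_mem hp)).hasFDerivWithinAt)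
      (injOn_coneMap t r ht ω hω e)]
    refine setLIntegral_congr_fun (hdom e) fun p hp => ?_
    have hp0 : 0 < ‖p‖ := norm_pos_iff.2 (ne_zero_of_mem hp)
    obtain ⟨u, hu, hpu⟩ : ∃ u : E3, ‖u‖ = 1 ∧ p = ‖p‖ • u :=
      ⟨‖p‖⁻¹ • p, by simp [norm_smul, hp0.ne'], by rw [smul_smul, mul_inv_cancel₀ hp0.ne', one_smul]⟩
    set s := ‖p‖ with hs
    have hup : s⁻¹ • p = u := by rw [hpu, smul_smul, inv_mul_cancel₀ hp0.ne', one_smul]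
    have hmpos := norm_add_smul_pos t r ht htr ω hω u hu
    have hmap : coneMap t (r • ω) p = s • (r • ω + t • u) := by
      rw [coneMap, ← hs, hpu, smul_add, smul_comm t s, add_comm]
    have hne : t + r * ⟪ω, u⟫ ≠ 0 := by
      intro h
      have : 0 < e * (t * ‖p‖ + r * ⟪ω, p⟫) := hp
      rw [← hs, hpu, inner_smul_right, show t * s + r * (s * ⟪ω, u⟫) = s * (t + r * ⟪ω, u⟫) by ring,
        h] at this
      simp at this
    have hdet : (coneMapDeriv t (r • ω) p).det = t ^ 2 * (t + r * ⟪ω, u⟫) := by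
      rw [det_coneMapDeriv t ht.ne', ← hs, ← real_inner_smul_left, hup, real_inner_smul_right,
        real_inner_comm]
    have hJ := jacobian_mul_density t r ht htr ω hω z0 hz2 u hu hne
    have hnorm : ‖coneMap t (r • ω) p‖ = s * ‖r • ω + t • u‖ := by
      rw [hmap, norm_smul, Real.norm_of_nonneg hp0.le]
    have hdir : ‖coneMap t (r • ω) p‖⁻¹ • coneMap t (r • ω) p =
        ‖r • ω + t • u‖⁻¹ • (r • ω + t • u) := by
      rw [hnorm, hmap, smul_smul]
      congr 1
      field_simp
    have hmemy : z0 < ⟪ω, ‖r • ω + t • u‖⁻¹ • (r • ω + t • u)⟫ := by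
      have : coneMap t (r • ω) p ∈ {y | z0 * ‖y‖ < ⟪ω, y⟫} := by
        rw [← image_coneMap t r ht htr ω hω e he z0 hz hz2]
        exact mem_image_of_mem _ hp
      have hpos : 0 < ‖coneMap t (r • ω) p‖ := by rw [hnorm]; positivity
      rw [← hdir, inner_smul_right, inv_mul_eq_div, lt_div_iff₀ hpos]
      exact this
    simp only [F, H, hdir, ← hs, hup]
    rw [hnorm]
    have hiff : s * ‖r • ω + t • u‖ < 1 ↔ s < ‖r • ω + t • u‖⁻¹ := by
      rw [← one_div, lt_div_iff₀ hmpos]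
    simp only [hiff, hdet]
    split_ifs
    · simp only [K, L]
      rw [indicator_of_mem (by exact hmemy), mul_left_comm, ← ENNReal.ofReal_mul (abs_nonneg _), hJ]
    · simp
  have hsum : 2 * ∫⁻ y, F y = ∫⁻ p, H p := by
    have hdisj : Disjoint (halfDomain t r ω 1) (halfDomain t r ω (-1)) := by
      rw [Set.disjoint_left]
      intro p h1 h2
      simp only [halfDomain, mem_ofPred_eq] at h1 h2
      linarith
    have hae : (halfDomain t r ω 1 ∪ halfDomain t r ω (-1) : Set E3) =ᵐ[volume] univ := by
      rw [ae_eq_univ]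
      refine measure_mono_null ?_ (measure_equality_cone t r ht htr ω hω)
      intro p hp
      simp only [halfDomain, mem_compl_iff, mem_union, mem_ofPred_eq, not_or, not_lt] at hp ⊢
      linarith [hp.1, hp.2]
    rw [two_mul]
    rw [← setLIntegral_univ H, ← setLIntegral_congr hae, lintegral_union (hdom _) hdisj,
      ← hchange 1 (Or.inl rfl), ← hchange (-1) (Or.inr rfl)]
  have hF' : ∫⁻ y, F y = _ := hF
  have hH' : ∫⁻ p, H p = _ := hH
  rw [hF', hH'] at hsum
  -- The factor `1 / 3` is the radial integral of `ρ ^ 2` over `(0, 1)`.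
  have h3 : (ENNReal.ofReal (1 ^ 3 / 3 : ℝ)) * 3 = 1 := by
    rw [show (3 : ENNReal) = ENNReal.ofReal 3 by simp, ← ENNReal.ofReal_mul (by norm_num)]
    norm_num
  have hR : (2 * ∫⁻ σ : Metric.sphere (0 : E3) 1, K σ * ENNReal.ofReal (1 ^ 3 / 3)
      ∂sphereMeasure) * 3 = 2 * ∫⁻ σ : Metric.sphere (0 : E3) 1 in {σ | z0 < ⟪ω, (σ : E3)⟫},
        G σ * ENNReal.ofReal (√(⟪ω, (σ : E3)⟫ ^ 2 - z0 ^ 2))⁻¹ ∂sphereMeasure := by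
    have hK' : Measurable fun σ : Metric.sphere (0 : E3) 1 => K σ := hK.comp measurable_subtype_coe
    rw [lintegral_mul_const _ hK', mul_assoc, mul_assoc, h3, mul_one,
      ← lintegral_indicator (s := {σ : Metric.sphere (0 : E3) 1 | z0 < ⟪ω, (σ : E3)⟫})
        (measurable_subtype_coe hcone)]
    rfl
  rw [← hR, hsum, ← lintegral_mul_const _ (by fun_prop)]
  refine lintegral_congr fun σ => ?_
  have hmpos := norm_add_smul_pos t r ht htr ω hω σ (by simp)
  have hr : 0 < r := ht.trans htr
  simp only [L]
  rw [mul_assoc, mul_assoc, show (3 : ENNReal) = ENNReal.ofReal 3 by simp,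
    ← ENNReal.ofReal_mul (by positivity), ← ENNReal.ofReal_mul (by positivity)]
  congr 2
  field_simp

/-- Kirchhoff formula for homogeneous degree −2 initial velocity in
the exterior (the formula Ψ₁,₀^{ext}[N], Appendix B.1.1 of the paper).
The integral over the sphere of radius t centered at x = rω is expressed as
the integral over the unit sphere with Jacobian t². -/
theorem kirchhoff_exterior_degree_one
    (N : E3 → ℝ) (hN : ContinuousOn N (Metric.sphere (0 : E3) 1))
    (t r : ℝ) (ht : 0 < t) (htr : t < r)
    (ω : E3) (hω : ‖ω‖ = 1)
    (x : E3) (hx : x = r • ω)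
    (z0 : ℝ) (hz0 : z0 = Real.sqrt (1 - (t / r) ^ 2)) :
    IntegrableOn
      (fun σ : Metric.sphere (0 : E3) 1 =>
        N σ * (Real.sqrt (⟪ω, (σ : E3)⟫ ^ 2 - z0 ^ 2))⁻¹)
      {σ : Metric.sphere (0 : E3) 1 | z0 < ⟪ω, (σ : E3)⟫} sphereMeasure ∧
    (1 / (4 * π * t)) * (t ^ 2 *
        sphereIntegral (fun σ => N (‖x + t • σ‖⁻¹ • (x + t • σ)) / ‖x + t • σ‖ ^ 2)) =
      (1 / (2 * π * r)) *
        ∫ σ in {σ : Metric.sphere (0 : E3) 1 | z0 < ⟪ω, (σ : E3)⟫},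
          N σ * (Real.sqrt (⟪ω, (σ : E3)⟫ ^ 2 - z0 ^ 2))⁻¹ ∂sphereMeasure := by
  subst hx
  have hr : 0 < r := ht.trans htr
  have hz : 0 ≤ z0 := hz0 ▸ Real.sqrt_nonneg _
  have hz2 : r ^ 2 * z0 ^ 2 = r ^ 2 - t ^ 2 := by
    have : (t / r) ^ 2 ≤ 1 := by
      rw [div_pow, div_le_one (by positivity)]
      nlinarith
    rw [hz0, Real.sq_sqrt (by linarith)]
    field_simp
  have hinner : Measurable fun σ : Metric.sphere (0 : E3) 1 => ⟪ω, (σ : E3)⟫ :=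
    (show Continuous fun σ : Metric.sphere (0 : E3) 1 => ⟪ω, (σ : E3)⟫ by fun_prop).measurable
  have hmpos : ∀ σ : Metric.sphere (0 : E3) 1, 0 < ‖r • ω + t • (σ : E3)‖ := fun σ =>
    norm_add_smul_pos t r ht htr ω hω σ (by simp)
  have hmc : Continuous fun σ : Metric.sphere (0 : E3) 1 => ‖r • ω + t • (σ : E3)‖ := by fun_prop
  set C : Set (Metric.sphere (0 : E3) 1) := {σ | z0 < ⟪ω, (σ : E3)⟫} with hC
  let h : Metric.sphere (0 : E3) 1 → ENNReal :=
    fun σ => ENNReal.ofReal (√(⟪ω, (σ : E3)⟫ ^ 2 - z0 ^ 2))⁻¹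
  have hh : Measurable h := ((hinner.pow_const 2).sub_const _).sqrt.inv.ennreal_ofReal
  let w : Metric.sphere (0 : E3) 1 → ENNReal :=
    fun σ => ENNReal.ofReal (t * r / ‖r • ω + t • (σ : E3)‖ ^ 2)
  have hwc : Continuous fun σ : Metric.sphere (0 : E3) 1 =>
      t * r / ‖r • ω + t • (σ : E3)‖ ^ 2 :=
    continuous_const.div (hmc.pow 2) fun σ => (pow_pos (hmpos σ) 2).ne'
  have hw : Measurable w := hwc.measurable.ennreal_ofReal
  let θ : Metric.sphere (0 : E3) 1 → Metric.sphere (0 : E3) 1 := fun σ =>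
    ⟨‖r • ω + t • (σ : E3)‖⁻¹ • (r • ω + t • (σ : E3)), by
      rw [mem_sphere_zero_iff_norm, norm_smul, norm_inv, norm_norm, inv_mul_cancel₀ (hmpos σ).ne']⟩
  have hθ : Continuous θ := by
    refine Continuous.subtype_mk ?_ _
    exact (hmc.inv₀ fun σ => (hmpos σ).ne').smul (by fun_prop)
  have hNc : Continuous fun σ : Metric.sphere (0 : E3) 1 => N σ :=
    hN.comp_continuous continuous_subtype_val fun σ => σ.2
  -- Testing the nonnegative formula on indicators of measurable subsets of the sphere.
  have hmeas : (sphereMeasure.withDensity w).map θ =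
      (2 : ENNReal) • (sphereMeasure.restrict C).withDensity h := by
    ext s hs
    have hsE : MeasurableSet ((↑) '' s : Set E3) :=
      (MeasurableEmbedding.subtype_coe Metric.isClosed_sphere.measurableSet).measurableSet_image.2 hs
    have key := lintegral_kirchhoff t r ht htr ω hω z0 hz hz2
      (((↑) '' s : Set E3).indicator 1) (measurable_one.indicator hsE)
    have hind : ∀ σ : Metric.sphere (0 : E3) 1,
        ((↑) '' s : Set E3).indicator (1 : E3 → ENNReal) σ = s.indicator 1 σ := fun σ => by
      simp [indicator]
    rw [Measure.map_apply hθ.measurable hs, withDensity_apply _ (hθ.measurable hs),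
      Measure.smul_apply, withDensity_apply _ hs, smul_eq_mul,
      ← lintegral_indicator hs, ← lintegral_indicator (hθ.measurable hs)]
    convert key using 1
    · refine lintegral_congr fun σ => ?_
      have := hind (θ σ)
      simp only [θ] at this
      rw [this]
      by_cases hσ : θ σ ∈ s
      · rw [indicator_of_mem (by exact hσ), indicator_of_mem (by exact hσ)]
        simp [w]
      · rw [indicator_of_notMem (by exact hσ), indicator_of_notMem (by exact hσ)]
        simp
    · congr 1
      refine lintegral_congr fun σ => ?_
      rw [hind]
      by_cases hσ : σ ∈ s <;> simp [hσ, h]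
  have hwlt : ∀ᵐ σ ∂(sphereMeasure), w σ < ⊤ := ae_of_all _ fun _ => ENNReal.ofReal_lt_top
  have hhlt : ∀ᵐ σ ∂(sphereMeasure.restrict C), h σ < ⊤ :=
    ae_of_all _ fun _ => ENNReal.ofReal_lt_top
  have hwt : ∀ σ, (w σ).toReal = t * r / ‖r • ω + t • (σ : E3)‖ ^ 2 := fun σ =>
    ENNReal.toReal_ofReal (by positivity)
  have hht : ∀ σ, (h σ).toReal = (√(⟪ω, (σ : E3)⟫ ^ 2 - z0 ^ 2))⁻¹ := fun σ =>
    ENNReal.toReal_ofReal (by positivity)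
  have : IsFiniteMeasure sphereMeasure := by unfold sphereMeasure; infer_instance
  have hint : Integrable (fun σ : Metric.sphere (0 : E3) 1 => N σ)
      ((sphereMeasure.withDensity w).map θ) := by
    rw [integrable_map_measure hNc.aestronglyMeasurable hθ.aemeasurable,
      integrable_withDensity_iff_integrable_smul' hw hwlt]
    simp only [hwt, smul_eq_mul]
    exact (hwc.mul (hNc.comp hθ)).integrable_of_hasCompactSupport
      (HasCompactSupport.of_compactSpace _)
  have hval : ∫ σ, N σ ∂((sphereMeasure.withDensity w).map θ) =
      t * r * sphereIntegral (fun σ => N (‖r • ω + t • σ‖⁻¹ • (r • ω + t • σ)) /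
        ‖r • ω + t • σ‖ ^ 2) := by
    rw [integral_map hθ.aemeasurable hNc.aestronglyMeasurable,
      integral_withDensity_eq_integral_toReal_smul hw hwlt, sphereIntegral,
      ← integral_const_mul]
    refine integral_congr_ae (ae_of_all _ fun σ => ?_)
    simp only [hwt, smul_eq_mul, θ]
    ring
  rw [hmeas] at hint hval
  rw [integrable_smul_measure two_ne_zero ENNReal.ofNat_ne_top,
    integrable_withDensity_iff_integrable_smul' hh hhlt] at hint
  rw [integral_smul_measure, integral_withDensity_eq_integral_toReal_smul hh hhlt] at hval
  simp only [hht, smul_eq_mul, mul_comm _⁻¹ (N _)] at hint hval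
  refine ⟨hint, ?_⟩
  have h2 : (2 : ENNReal).toReal = 2 := by simp
  rw [h2] at hval
  generalize sphereIntegral _ = I at hval ⊢
  generalize ∫ σ in C, N σ * (√(⟪ω, (σ : E3)⟫ ^ 2 - z0 ^ 2))⁻¹ ∂sphereMeasure = J at hval ⊢
  have hπ := Real.pi_pos
  field_simp
  linarith
end
end

section
/- Let L: S² → ℝ be continuous, let r > t > 0, ω ∈ S², x = rω, and z₀ = (1 − (t/r)²)^{1/2}. Then σ ↦ ⟨ω,σ⟩·L(σ)·(⟨ω,σ⟩² − z₀²)^{−1/2} is integrable on {σ ∈ S²: ⟨ω,σ⟩ > z₀}, and (1/(4πt)) ∫_{\{y ∈ ℝ³: |y−x| = t\}} L(y/|y|)·|y|^{−3} dS(y) = (1/(2π(r² − t²))) ∫_{\{σ ∈ S²: ⟨ω,σ⟩ > z₀\}} ⟨ω,σ⟩·L(σ)·(⟨ω,σ⟩² − z₀²)^{−1/2} dS(σ), where the left-hand integral is with respect to the surface measure on the sphere of radius t centered at x. -/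
/-!
By the hat-box theorem of Archimedes, the height `z ∈ (-1, 1)` over an axis `ω` and the azimuth `φ` carry
`dz dφ` to surface measure on `S²` (`measurePreserving_spherePt`). With `x = r ω`, radial
projection of the sphere `|y - x| = t` to the unit sphere preserves the azimuth
(`shifted_spherePt`), so only the integrals `A(u) = ∫ L dφ` over circles at height `u`
(`latitudeIntegral`) matter, and the claim is an identity between one-dimensional integrals.

Put `w² = r² - t²`, so that `z₀ = w / r`, and let `ρ = |y|`. The points of the sphere at
distance `ρ` project to height `u(ρ) = (ρ² + w²) / (2rρ)`. Since `ρ dρ = r t dz`, the left-hand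
side is a multiple of `∫ A(u(ρ)) ρ⁻² dρ` over `(r - t, r + t)`. Each direction with `u > z₀` meets
the sphere at two distances, exchanged by `ρ ↦ w² / ρ`; folding the integral under this inversion
gives the weight `w⁻² + ρ⁻² = (2r / w²) u / ρ` on `(w, r + t)` (`chord_subst`). On that interval
`u du / √(u² - z₀²) = u dρ / ρ` (`singular_weight_subst`), which both identifies the right-hand side
and proves its integrability.
-/


noncomputable section

open MeasureTheory Real Set Filter Topology Metric
open scoped RealInnerProductSpace Classical

/-! ### Spherical coordinates around an axis -/

section Geometry

open scoped Pointwise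

/-- The point of the unit sphere with polar angle `θ` from the axis `b 0` and azimuth `φ`. -/
def spherePt (b : OrthonormalBasis (Fin 3) ℝ E3) (θ φ : ℝ) : Metric.sphere (0 : E3) 1 :=
  ⟨cos θ • b 0 + sin θ • (cos φ • b 1 + sin φ • b 2), by
    have h : ‖cos θ • b 0 + sin θ • (cos φ • b 1 + sin φ • b 2)‖ ^ 2 = 1 := by
      rw [← b.sum_sq_norm_inner_right]
      simp only [Fin.sum_univ_three, inner_add_right, inner_smul_right,
        b.inner_eq_ite]
      simp only [Real.norm_eq_abs, sq_abs]
      simp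
      linear_combination sin_sq_add_cos_sq θ + sin θ ^ 2 * sin_sq_add_cos_sq φ
    rw [mem_sphere_zero_iff_norm]
    nlinarith [norm_nonneg (cos θ • b 0 + sin θ • (cos φ • b 1 + sin φ • b 2))]⟩

lemma continuous_spherePt (b : OrthonormalBasis (Fin 3) ℝ E3) :
    Continuous fun p : ℝ × ℝ => spherePt b p.1 p.2 := by
  unfold spherePt
  fun_prop

lemma inner_spherePt (b : OrthonormalBasis (Fin 3) ℝ E3) (θ φ : ℝ) :
    ⟪b 0, (spherePt b θ φ : E3)⟫ = cos θ := by
  simp [spherePt, inner_add_right, inner_smul_right, b.inner_eq_ite]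

/-- Cartesian coordinates in an orthonormal basis, with the axis `b 0` split off. -/
def cyl (b : OrthonormalBasis (Fin 3) ℝ E3) (q : ℝ × ℝ × ℝ) : E3 :=
  q.1 • b 0 + (q.2.1 • b 1 + q.2.2 • b 2)

lemma measurePreserving_cyl (b : OrthonormalBasis (Fin 3) ℝ E3) :
    MeasurePreserving (cyl b) volume volume := by
  have h1 := (volume_preserving_piFinSuccAbove (fun _ : Fin 3 => ℝ) 0).symm
  have h2 := (MeasurePreserving.id (volume : Measure ℝ)).prod
    (volume_preserving_finTwoArrow ℝ).symm
  have h3 := PiLp.volume_preserving_toLp (Fin 3)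
  have h := b.measurePreserving_repr_symm.comp (h3.comp (h1.comp h2))
  refine (congrArg (fun f => MeasurePreserving f volume volume) (funext fun q => ?_)).mpr h
  simp only [cyl, Function.comp]
  rw [← b.sum_repr_symm]
  simp [Fin.sum_univ_three, MeasurableEquiv.piFinSuccAbove, MeasurableEquiv.finTwoArrow,
    MeasurableEquiv.piFinTwo, add_assoc]

/-- Integration in spherical coordinates: cylindrical coordinates around the axis, then polar
coordinates in the half plane spanned by the axis and the radial direction. -/
lemma lintegral_spherical (b : OrthonormalBasis (Fin 3) ℝ E3) (F : E3 → ENNReal)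
    (hF : Measurable F) :
    ∫⁻ y, F y = ∫⁻ φ in Ioo (-π) π, ∫⁻ θ in Ioo 0 π, ∫⁻ ρ in Ioi (0 : ℝ),
      ENNReal.ofReal (ρ * (ρ * sin θ)) * F (ρ • (spherePt b θ φ : E3)) := by
  have hcyl : Continuous (cyl b) := by unfold cyl; fun_prop
  have hm : Measurable fun q : ℝ × ℝ × ℝ => F (cyl b q) := hF.comp hcyl.measurable
  rw [← (measurePreserving_cyl b).lintegral_comp hF, Measure.volume_eq_prod,
    lintegral_prod _ hm.aemeasurable]
  have key : ∀ a : ℝ, ∫⁻ p : ℝ × ℝ, F (cyl b (a, p)) =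
      ∫⁻ φ in Ioo (-π) π, ∫⁻ s : ℝ, ENNReal.ofReal s * F (cyl b (a, s * cos φ, s * sin φ)) := by
    intro a
    rw [← lintegral_comp_polarCoord_symm]
    simp only [polarCoord_target, polarCoord_symm_apply, smul_eq_mul]
    rw [Measure.volume_eq_prod, setLIntegral_prod_symm]
    · refine lintegral_congr fun φ => ?_
      -- the weight `ofReal s` vanishes for `s ≤ 0`
      refine setLIntegral_eq_of_support_subset ?_
      intro s hs
      by_contra h
      exact hs (by simp [ENNReal.ofReal_of_nonpos (not_lt.1 h)])
    · refine Measurable.aemeasurable ?_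
      refine (by fun_prop : Measurable fun p : ℝ × ℝ => ENNReal.ofReal p.1).mul
        (hF.comp (hcyl.measurable.comp (by fun_prop)))
  simp_rw [key]
  rw [lintegral_lintegral_swap]
  swap
  · refine Measurable.aemeasurable ?_
    exact Measurable.lintegral_prod_right'
      (f := fun z : (ℝ × ℝ) × ℝ => ENNReal.ofReal z.2 *
        F (cyl b (z.1.1, z.2 * cos z.1.2, z.2 * sin z.1.2)))
      ((by fun_prop : Measurable fun z : (ℝ × ℝ) × ℝ => ENNReal.ofReal z.2).mul
        (hF.comp (hcyl.measurable.comp (by fun_prop))))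
  refine lintegral_congr fun φ => ?_
  have hm3 : Measurable fun p : ℝ × ℝ =>
      ENNReal.ofReal p.2 * F (cyl b (p.1, p.2 * cos φ, p.2 * sin φ)) :=
    (by fun_prop : Measurable fun p : ℝ × ℝ => ENNReal.ofReal p.2).mul
        (hF.comp (hcyl.measurable.comp (by fun_prop)))
  rw [← lintegral_prod (fun p : ℝ × ℝ =>
      ENNReal.ofReal p.2 * F (cyl b (p.1, p.2 * cos φ, p.2 * sin φ))) hm3.aemeasurable,
    ← Measure.volume_eq_prod, ← lintegral_comp_polarCoord_symm]
  simp only [polarCoord_target, polarCoord_symm_apply, smul_eq_mul]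
  rw [Measure.volume_eq_prod, setLIntegral_prod_symm]
  swap
  · refine Measurable.aemeasurable ?_
    exact (by fun_prop : Measurable fun p : ℝ × ℝ => ENNReal.ofReal p.1).mul
      ((by fun_prop : Measurable fun p : ℝ × ℝ => ENNReal.ofReal (p.1 * sin p.2)).mul
        (hF.comp (hcyl.measurable.comp (by fun_prop))))
  have hsub : Ioo 0 π ∩ Ioo (-π) π = Ioo 0 π :=
    inter_eq_left.2 (Ioo_subset_Ioo_left (by linarith [pi_pos]))
  rw [← hsub, ← setLIntegral_indicator measurableSet_Ioo]
  refine setLIntegral_congr_fun measurableSet_Ioo fun θ hθ => ?_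
  -- the weight `ofReal (ρ * sin θ)` vanishes for `θ ≤ 0`
  by_cases h0 : 0 < θ
  · rw [indicator_of_mem (show θ ∈ Ioo 0 π from ⟨h0, hθ.2⟩)]
    refine setLIntegral_congr_fun measurableSet_Ioi fun ρ hρ => ?_
    rw [← mul_assoc, ← ENNReal.ofReal_mul (le_of_lt hρ)]
    simp only [cyl, spherePt, smul_add, smul_smul, mul_assoc]
  · rw [indicator_of_notMem fun h => h0 h.1]
    rw [setLIntegral_congr_fun (g := fun _ => 0) measurableSet_Ioi, lintegral_zero]
    intro ρ hρ
    have h1 : sin θ ≤ 0 := sin_nonpos_of_nonpos_of_neg_pi_le (not_lt.1 h0) hθ.1.le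
    simp only
    rw [ENNReal.ofReal_of_nonpos (mul_nonpos_of_nonneg_of_nonpos (le_of_lt hρ) h1)]
    simp

/-- The cone `(0, 1) • s` is the set whose volume defines the surface measure of `s`. -/
lemma measurableSet_cone (s : Set (Metric.sphere (0 : E3) 1)) (hs : MeasurableSet s) :
    MeasurableSet (Ioo (0 : ℝ) 1 • ((↑) '' s : Set E3)) := by
  have h : ∀ r : Ioi (0 : ℝ), (Subtype.val '' (homeomorphUnitSphereProd E3 ⁻¹'
      s ×ˢ Iio r)) = Ioo (0 : ℝ) r • ((↑) '' s : Set E3) := by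
    intro r
    rw [← image2_smul, image2_image_right, ← Homeomorph.image_symm, image_image,
      ← image_subtype_val_Ioi_Iio, image2_image_left, image2_swap, ← image_prod]
    rfl
  rw [← h ⟨1, mem_Ioi.2 one_pos⟩]
  exact (MeasurableEmbedding.subtype_coe (measurableSet_singleton _).compl).measurableSet_image.2
    ((homeomorphUnitSphereProd E3).measurable (hs.prod measurableSet_Iio))

lemma smul_mem_cone (s : Set (Metric.sphere (0 : E3) 1)) (σ : Metric.sphere (0 : E3) 1)
    (ρ : ℝ) (hρ : 0 < ρ) :
    ρ • (σ : E3) ∈ Ioo (0 : ℝ) 1 • ((↑) '' s : Set E3) ↔ ρ < 1 ∧ σ ∈ s := by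
  constructor
  · rintro ⟨a, ha, _, ⟨τ, hτ, rfl⟩, h⟩
    simp only at h
    have h1 := congrArg norm h
    rw [norm_smul, norm_smul, norm_eq_of_mem_sphere, norm_eq_of_mem_sphere, mul_one, mul_one,
      norm_of_nonneg ha.1.le, norm_of_nonneg hρ.le] at h1
    subst h1
    have : τ = σ := Subtype.ext (smul_right_injective _ hρ.ne' h)
    exact ⟨ha.2, this ▸ hτ⟩
  · rintro ⟨h1, h2⟩
    exact ⟨ρ, ⟨hρ, h1⟩, σ, ⟨σ, h2, rfl⟩, rfl⟩

end Geometry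

section Disintegration

open scoped Pointwise

/-- Surface measure in spherical coordinates, `dS = sin θ dθ dφ`, with the substitution
`z = cos θ`. -/
lemma sphereMeasure_apply (b : OrthonormalBasis (Fin 3) ℝ E3)
    (s : Set (Metric.sphere (0 : E3) 1)) (hs : MeasurableSet s) :
    sphereMeasure s = ∫⁻ φ in Ioo (-π) π, ∫⁻ z in Ioo (-1 : ℝ) 1,
      s.indicator 1 (spherePt b (arccos z) φ) := by
  have hrad : ∫⁻ ρ in Ioo (0 : ℝ) 1, ENNReal.ofReal (ρ * ρ) = ENNReal.ofReal (1 / 3) := by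
    rw [← ofReal_integral_eq_lintegral_ofReal]
    · rw [← integral_Ioc_eq_integral_Ioo, ← intervalIntegral.integral_of_le zero_le_one]
      simp_rw [← pow_two]
      rw [integral_pow]
      norm_num
    · exact (Continuous.integrableOn_Icc (by fun_prop)).mono_set Ioo_subset_Icc_self
    · exact Eventually.of_forall fun ρ => mul_self_nonneg ρ
  rw [sphereMeasure, Measure.toSphere_apply' _ hs,
    ← lintegral_indicator_one (measurableSet_cone s hs),
    lintegral_spherical b _ (measurable_one.indicator (measurableSet_cone s hs))]
  have hin : ∀ φ : ℝ, ∫⁻ θ in Ioo 0 π, ∫⁻ ρ in Ioi (0 : ℝ), ENNReal.ofReal (ρ * (ρ * sin θ)) *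
        (Ioo (0 : ℝ) 1 • ((↑) '' s : Set E3)).indicator 1 (ρ • (spherePt b θ φ : E3)) =
      ENNReal.ofReal (1 / 3) *
        ∫⁻ z in Ioo (-1 : ℝ) 1, s.indicator 1 (spherePt b (arccos z) φ) := by
    intro φ
    have himg : cos '' Ioo 0 π = Ioo (-1) 1 := by
      ext z
      constructor
      · rintro ⟨θ, hθ, rfl⟩
        exact ⟨by simpa using cos_lt_cos_of_nonneg_of_le_pi hθ.1.le le_rfl hθ.2,
          by simpa using cos_lt_cos_of_nonneg_of_le_pi le_rfl hθ.2.le hθ.1⟩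
      · intro hz
        exact ⟨arccos z, ⟨arccos_pos.2 hz.2, lt_of_le_of_ne (arccos_le_pi z)
          fun h => absurd (arccos_eq_pi.1 h) (not_le.2 hz.1)⟩, cos_arccos hz.1.le hz.2.le⟩
    rw [← himg, lintegral_image_eq_lintegral_abs_deriv_mul measurableSet_Ioo
      (fun θ _ => (hasDerivAt_cos θ).hasDerivWithinAt)
      (injOn_cos.mono Ioo_subset_Icc_self), ← lintegral_const_mul' _ _ ENNReal.ofReal_ne_top]
    refine setLIntegral_congr_fun measurableSet_Ioo fun θ hθ => ?_
    have hsin := sin_pos_of_mem_Ioo hθ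
    rw [arccos_cos hθ.1.le hθ.2.le, abs_neg, abs_of_pos hsin, ← hrad,
      ← lintegral_mul_const _ (by fun_prop)]
    have hsub : Ioo (0 : ℝ) 1 ∩ Ioi 0 = Ioo 0 1 := inter_eq_left.2 fun x hx => hx.1
    rw [← hsub, ← setLIntegral_indicator measurableSet_Ioo]
    refine setLIntegral_congr_fun measurableSet_Ioi fun ρ hρ => ?_
    have hρ : 0 < ρ := hρ
    have hc := smul_mem_cone s (spherePt b θ φ) ρ hρ
    rw [hsub]
    simp only [indicator_apply, hc]
    by_cases h1 : ρ < 1 <;> by_cases h2 : spherePt b θ φ ∈ s <;>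
      simp [h1, h2, hρ, ← ENNReal.ofReal_mul, mul_assoc, mul_nonneg hρ.le hρ.le]
  simp_rw [hin]
  rw [lintegral_const_mul' _ _ ENNReal.ofReal_ne_top, ← mul_assoc]
  -- the factor `3` of `toSphere` cancels `∫₀¹ ρ² dρ = 1/3`
  have h3 : ((Module.finrank ℝ E3 : ℕ) : ENNReal) * ENNReal.ofReal (1 / 3) = 1 := by
    rw [finrank_euclideanSpace_fin, ← ENNReal.ofReal_natCast, ← ENNReal.ofReal_mul (by norm_num)]
    norm_num
  rw [h3, one_mul]

/-- Archimedes: the axial coordinate `z ∈ (-1, 1)` and the azimuth `φ ∈ (-π, π)` carry Lebesgue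
measure to surface measure. -/
lemma measurePreserving_spherePt (b : OrthonormalBasis (Fin 3) ℝ E3) :
    MeasurePreserving (fun p : ℝ × ℝ => spherePt b (arccos p.1) p.2)
      ((volume.restrict (Ioo (-1 : ℝ) 1)).prod (volume.restrict (Ioo (-π) π)))
      sphereMeasure := by
  have hmeas : Measurable (fun p : ℝ × ℝ => spherePt b (arccos p.1) p.2) :=
    ((continuous_spherePt b).comp (by fun_prop : Continuous fun p : ℝ × ℝ =>
      (arccos p.1, p.2))).measurable
  refine ⟨hmeas, Measure.ext fun s hs => ?_⟩
  rw [Measure.map_apply hmeas hs, sphereMeasure_apply b s hs,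
    ← lintegral_indicator_one (hmeas hs), lintegral_prod_symm]
  · rfl
  · exact (measurable_one.indicator (hmeas hs)).aemeasurable

end Disintegration

/-! ### Two substitutions in the radial variable -/

/-- For `ρ ∈ (w, r + t)` the cosine `u = (ρ² + w²) / (2rρ)` of the angle at the origin sweeps
`(z₀, 1)`, and `u du / √(u² - z₀²) = u dρ / ρ`, which removes the square-root singularity. -/
lemma singular_weight_subst (t r w : ℝ) (ht : 0 < t) (htr : t < r) (hw : 0 < w)
    (hw2 : w ^ 2 = r ^ 2 - t ^ 2) (K : ℝ → ℝ) :
    (IntegrableOn (fun u => u * (√(u ^ 2 - (w / r) ^ 2))⁻¹) (Ioo (w / r) 1)) ∧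
    ∫ u in Ioo (w / r) 1, u * (√(u ^ 2 - (w / r) ^ 2))⁻¹ * K u =
      ∫ ρ in Ioo w (r + t), (ρ ^ 2 + w ^ 2) / (2 * r * ρ ^ 2) *
        K ((ρ ^ 2 + w ^ 2) / (2 * r * ρ)) := by
  have hr : 0 < r := ht.trans htr
  have hwr : w < r + t := by nlinarith
  have hder : ∀ ρ ∈ Ioo w (r + t), HasDerivWithinAt (fun ρ => (ρ ^ 2 + w ^ 2) / (2 * r * ρ))
      ((ρ ^ 2 - w ^ 2) / (2 * r * ρ ^ 2)) (Ioo w (r + t)) ρ := by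
    intro ρ hρ
    have hρ0 : 0 < ρ := hw.trans hρ.1
    have := (((hasDerivAt_id ρ).pow 2).add_const (w ^ 2)).div
      ((hasDerivAt_id ρ).const_mul (2 * r)) (by simp only [id]; positivity)
    refine (this.congr_deriv ?_).hasDerivWithinAt
    simp
    field_simp
    ring
  have hinj : InjOn (fun ρ => (ρ ^ 2 + w ^ 2) / (2 * r * ρ)) (Ioo w (r + t)) := by
    intro a ha b hb h
    have ha0 : 0 < a := hw.trans ha.1
    have hb0 : 0 < b := hw.trans hb.1
    simp only at h
    rw [div_eq_div_iff (by positivity) (by positivity)] at h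
    have h1 : (2 * r) * ((a - b) * (a * b - w ^ 2)) = 0 := by linear_combination h
    have h2 : 0 < a * b - w ^ 2 := by nlinarith [ha.1, hb.1]
    rcases mul_eq_zero.1 h1 with h3 | h3
    · linarith
    · rcases mul_eq_zero.1 h3 with h4 | h4 <;> linarith
  have himg : (fun ρ => (ρ ^ 2 + w ^ 2) / (2 * r * ρ)) '' Ioo w (r + t) = Ioo (w / r) 1 := by
    ext u
    constructor
    · rintro ⟨ρ, hρ, rfl⟩
      have hρ0 : 0 < ρ := hw.trans hρ.1
      constructor
      · rw [div_lt_div_iff₀ hr (by positivity)]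
        nlinarith [mul_pos hr (pow_pos (sub_pos.2 hρ.1) 2)]
      · rw [div_lt_one (by positivity)]
        have : r - t < ρ := by nlinarith [hρ.1]
        nlinarith [mul_pos (sub_pos.2 this) (sub_pos.2 hρ.2)]
    · intro hu
      -- the larger root of `ρ² - 2ruρ + w² = 0`
      have hur : w < r * u := by have := (div_lt_iff₀ hr).1 hu.1; linarith
      have hpos : 0 < (r * u) ^ 2 - w ^ 2 := by nlinarith
      have hsq := sq_sqrt hpos.le
      have hs0 := sqrt_pos.2 hpos
      refine ⟨r * u + √((r * u) ^ 2 - w ^ 2), ⟨by linarith, ?_⟩, ?_⟩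
      · have h1 : r * u < r := by nlinarith [hu.2]
        have : √((r * u) ^ 2 - w ^ 2) < t := by
          rw [sqrt_lt' ht]
          nlinarith
        linarith
      · simp only
        have : 0 < r * u := hw.trans hur
        rw [div_eq_iff (by positivity)]
        linear_combination hsq
  have hpt : ∀ ρ ∈ Ioo w (r + t), |(ρ ^ 2 - w ^ 2) / (2 * r * ρ ^ 2)| *
      ((ρ ^ 2 + w ^ 2) / (2 * r * ρ) *
        (√(((ρ ^ 2 + w ^ 2) / (2 * r * ρ)) ^ 2 - (w / r) ^ 2))⁻¹) =
      (ρ ^ 2 + w ^ 2) / (2 * r * ρ ^ 2) := by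
    intro ρ hρ
    have hρ0 : 0 < ρ := hw.trans hρ.1
    have hd : 0 < ρ ^ 2 - w ^ 2 := by nlinarith [hρ.1]
    have h1 : ((ρ ^ 2 + w ^ 2) / (2 * r * ρ)) ^ 2 - (w / r) ^ 2 =
        ((ρ ^ 2 - w ^ 2) / (2 * r * ρ)) ^ 2 := by
      field_simp
      ring
    rw [h1, sqrt_sq (by positivity), abs_of_pos (by positivity)]
    field_simp
  constructor
  · rw [← himg, integrableOn_image_iff_integrableOn_abs_deriv_smul measurableSet_Ioo hder hinj]
    have hc : ContinuousOn (fun ρ : ℝ => (ρ ^ 2 + w ^ 2) / (2 * r * ρ ^ 2)) (Icc w (r + t)) := by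
      refine ContinuousOn.div (by fun_prop) (by fun_prop) fun ρ hρ => ?_
      have : 0 < ρ := hw.trans_le hρ.1
      positivity
    exact (hc.integrableOn_Icc.mono_set Ioo_subset_Icc_self).congr_fun
      (fun ρ hρ => (hpt ρ hρ).symm) measurableSet_Ioo
  · rw [← himg, integral_image_eq_integral_abs_deriv_smul measurableSet_Ioo hder hinj]
    refine setIntegral_congr_fun measurableSet_Ioo fun ρ hρ => ?_
    simp only [smul_eq_mul]
    rw [← mul_assoc, hpt ρ hρ]

/-- The chord identity. With `ρ = |y|` as variable the integral over the sphere around `x` is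
`(r t)⁻¹ ∫ A(u(ρ)) ρ⁻² dρ` over `(r - t, r + t)`. The inversion `ρ ↦ w² / ρ`, which swaps the two
intersections of a ray with that sphere, preserves `u` and folds `(r - t, w)` onto
`(w, r + t)`. -/
lemma chord_subst (t r w : ℝ) (ht : 0 < t) (htr : t < r) (hw : 0 < w)
    (hw2 : w ^ 2 = r ^ 2 - t ^ 2) (A : ℝ → ℝ) (hA : Continuous A) :
    ∫ z in Ioo (-1 : ℝ) 1, A ((r + t * z) / √(r ^ 2 + t ^ 2 + 2 * r * t * z)) /
        √(r ^ 2 + t ^ 2 + 2 * r * t * z) ^ 3 =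
      2 / (t * w ^ 2) * ∫ ρ in Ioo w (r + t), (ρ ^ 2 + w ^ 2) / (2 * r * ρ ^ 2) *
        A ((ρ ^ 2 + w ^ 2) / (2 * r * ρ)) := by
  have hr : 0 < r := ht.trans htr
  have hwr : w < r + t := by nlinarith
  have hrw : r - t < w := by nlinarith
  have hrt : 0 < r - t := sub_pos.2 htr
  have hsq : ∀ ρ : ℝ, 0 < ρ →
      √(r ^ 2 + t ^ 2 + 2 * r * t * ((ρ ^ 2 - r ^ 2 - t ^ 2) / (2 * r * t))) = ρ := by
    intro ρ hρ
    rw [show r ^ 2 + t ^ 2 + 2 * r * t * ((ρ ^ 2 - r ^ 2 - t ^ 2) / (2 * r * t)) = ρ ^ 2 by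
      field_simp; ring]
    exact sqrt_sq hρ.le
  have hU : ∀ ρ : ℝ, 0 < ρ → (r + t * ((ρ ^ 2 - r ^ 2 - t ^ 2) / (2 * r * t))) / ρ =
      (ρ ^ 2 + w ^ 2) / (2 * r * ρ) := by
    intro ρ hρ
    rw [hw2]
    field_simp
    ring
  have hkc : ∀ a b : ℝ, 0 < a → 0 < b →
      ContinuousOn (fun ρ => A ((ρ ^ 2 + w ^ 2) / (2 * r * ρ)) / ρ ^ 2) (uIcc a b) := by
    intro a b ha hb
    have hp : ∀ ρ ∈ uIcc a b, 0 < ρ := fun ρ hρ => (lt_min ha hb).trans_le hρ.1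
    refine ContinuousOn.div (hA.comp_continuousOn (ContinuousOn.div (by fun_prop) (by fun_prop)
      fun ρ hρ => ?_)) (by fun_prop) fun ρ hρ => ?_ <;>
    · have := hp ρ hρ
      positivity
  have step1 : ∫ z in (-1 : ℝ)..1, A ((r + t * z) / √(r ^ 2 + t ^ 2 + 2 * r * t * z)) /
        √(r ^ 2 + t ^ 2 + 2 * r * t * z) ^ 3 =
      (1 / (r * t)) * ∫ ρ in (r - t)..(r + t), A ((ρ ^ 2 + w ^ 2) / (2 * r * ρ)) / ρ ^ 2 := by
    have hp : ∀ ρ ∈ uIcc (r - t) (r + t), 0 < ρ := fun ρ hρ =>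
      (lt_min hrt (by linarith)).trans_le hρ.1
    have := intervalIntegral.integral_comp_mul_deriv' (a := r - t) (b := r + t)
      (f := fun ρ => (ρ ^ 2 - r ^ 2 - t ^ 2) / (2 * r * t)) (f' := fun ρ => ρ / (r * t))
      (g := fun z => A ((r + t * z) / √(r ^ 2 + t ^ 2 + 2 * r * t * z)) /
        √(r ^ 2 + t ^ 2 + 2 * r * t * z) ^ 3) ?_ (by fun_prop) ?_
    · rw [show ((r - t) ^ 2 - r ^ 2 - t ^ 2) / (2 * r * t) = -1 by field_simp; ring,
        show ((r + t) ^ 2 - r ^ 2 - t ^ 2) / (2 * r * t) = 1 by field_simp; ring] at this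
      rw [← this, ← intervalIntegral.integral_const_mul]
      refine intervalIntegral.integral_congr fun ρ hρ => ?_
      have hρ0 := hp ρ hρ
      simp only [Function.comp]
      rw [hsq ρ hρ0, hU ρ hρ0]
      field_simp
    · intro ρ _
      refine (((((hasDerivAt_id ρ).pow 2).sub_const (r ^ 2)).sub_const (t ^ 2)).div_const
        (2 * r * t)).congr_deriv ?_
      simp
      field_simp
    · have hz : ∀ z ∈ (fun ρ => (ρ ^ 2 - r ^ 2 - t ^ 2) / (2 * r * t)) '' uIcc (r - t) (r + t),
          √(r ^ 2 + t ^ 2 + 2 * r * t * z) ≠ 0 := by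
        rintro _ ⟨ρ, hρ, rfl⟩
        simp only
        rw [hsq ρ (hp ρ hρ)]
        exact (hp ρ hρ).ne'
      exact ContinuousOn.div (hA.comp_continuousOn (ContinuousOn.div (by fun_prop) (by fun_prop)
        hz)) (by fun_prop) fun z h => pow_ne_zero 3 (hz z h)
  have step2 : ∫ ρ in (r - t)..w, A ((ρ ^ 2 + w ^ 2) / (2 * r * ρ)) / ρ ^ 2 =
      ∫ ρ in w..(r + t), A ((ρ ^ 2 + w ^ 2) / (2 * r * ρ)) / w ^ 2 := by
    have hp : ∀ ρ ∈ uIcc w (r + t), 0 < ρ := fun ρ hρ =>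
      (lt_min hw (by linarith)).trans_le hρ.1
    have := intervalIntegral.integral_comp_mul_deriv' (a := w) (b := r + t)
      (f := fun ρ => w ^ 2 / ρ) (f' := fun ρ => -w ^ 2 / ρ ^ 2)
      (g := fun ρ => A ((ρ ^ 2 + w ^ 2) / (2 * r * ρ)) / ρ ^ 2) ?_ ?_ ?_
    · rw [show w ^ 2 / w = w by field_simp, show w ^ 2 / (r + t) = r - t by
        rw [hw2]; field_simp; ring] at this
      rw [intervalIntegral.integral_symm, ← this, ← intervalIntegral.integral_neg]
      refine intervalIntegral.integral_congr fun ρ hρ => ?_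
      have hρ0 := hp ρ hρ
      simp only [Function.comp]
      rw [show ((w ^ 2 / ρ) ^ 2 + w ^ 2) / (2 * r * (w ^ 2 / ρ)) =
        (ρ ^ 2 + w ^ 2) / (2 * r * ρ) by field_simp; ring]
      field_simp
    · intro ρ hρ
      have hρ0 := hp ρ hρ
      refine ((hasDerivAt_const ρ (w ^ 2)).div (hasDerivAt_id ρ) hρ0.ne').congr_deriv ?_
      simp
    · exact ContinuousOn.div (by fun_prop) (by fun_prop) fun ρ hρ => pow_ne_zero 2 (hp ρ hρ).ne'
    · refine ContinuousOn.mono (s := Ioi 0) ?_ ?_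
      · refine ContinuousOn.div (hA.comp_continuousOn (ContinuousOn.div (by fun_prop)
          (by fun_prop) fun ρ hρ => ?_)) (by fun_prop) fun ρ hρ => ?_ <;>
        · have : 0 < ρ := hρ
          positivity
      · rintro _ ⟨ρ, hρ, rfl⟩
        exact div_pos (by positivity) (hp ρ hρ)
  have hI : IntervalIntegrable (fun ρ => A ((ρ ^ 2 + w ^ 2) / (2 * r * ρ)) / w ^ 2) volume
      w (r + t) := by
    have hp : ∀ ρ ∈ uIcc w (r + t), 0 < ρ := fun ρ hρ =>
      (lt_min hw (by linarith)).trans_le hρ.1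
    refine ContinuousOn.intervalIntegrable ?_
    refine ContinuousOn.div_const (hA.comp_continuousOn (ContinuousOn.div (by fun_prop)
      (by fun_prop) fun ρ hρ => ?_)) _
    have := hp ρ hρ
    positivity
  rw [← integral_Ioc_eq_integral_Ioo, ← integral_Ioc_eq_integral_Ioo,
    ← intervalIntegral.integral_of_le (by norm_num), ← intervalIntegral.integral_of_le hwr.le,
    step1, ← intervalIntegral.integral_add_adjacent_intervals
      (hkc (r - t) w hrt hw).intervalIntegrable
      (hkc w (r + t) hw (by linarith)).intervalIntegrable, step2,
    ← intervalIntegral.integral_add hI (hkc w (r + t) hw (by linarith)).intervalIntegrable,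
    ← intervalIntegral.integral_const_mul, ← intervalIntegral.integral_const_mul]
  refine intervalIntegral.integral_congr fun ρ hρ => ?_
  have hρ0 : 0 < ρ := (lt_min hw (by linarith)).trans_le hρ.1
  field_simp

/-! ### Reduction to circles of latitude -/

/-- The integral of `L` in the azimuth over the circle of latitude at height `z` along the axis
`b 0`. Since `arccos` clamps its argument to `[-1, 1]`, this is continuous on all of `ℝ`. -/
def latitudeIntegral (b : OrthonormalBasis (Fin 3) ℝ E3) (L : E3 → ℝ) (z : ℝ) : ℝ :=
  ∫ φ in Ioo (-π) π, L (spherePt b (arccos z) φ)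

lemma continuous_latitude_integrand (b : OrthonormalBasis (Fin 3) ℝ E3) (L : E3 → ℝ)
    (hL : ContinuousOn L (Metric.sphere (0 : E3) 1)) :
    Continuous fun p : ℝ × ℝ => L (spherePt b (arccos p.1) p.2) := by
  have hLs : Continuous fun σ : Metric.sphere (0 : E3) 1 => L σ :=
    hL.comp_continuous continuous_subtype_val fun σ => σ.2
  have hP : Continuous fun p : ℝ × ℝ => spherePt b (arccos p.1) p.2 :=
    Continuous.comp (g := fun p : ℝ × ℝ => spherePt b p.1 p.2)
      (f := fun p : ℝ × ℝ => (arccos p.1, p.2)) (continuous_spherePt b) (by fun_prop)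
  exact Continuous.comp (g := fun σ : Metric.sphere (0 : E3) 1 => L σ)
    (f := fun p : ℝ × ℝ => spherePt b (arccos p.1) p.2) hLs hP

lemma continuous_latitudeIntegral (b : OrthonormalBasis (Fin 3) ℝ E3) (L : E3 → ℝ)
    (hL : ContinuousOn L (Metric.sphere (0 : E3) 1)) : Continuous (latitudeIntegral b L) := by
  have : latitudeIntegral b L = fun z => ∫ φ in (-π)..π, L (spherePt b (arccos z) φ) := by
    funext z
    rw [intervalIntegral.integral_of_le (by linarith [pi_pos]), integral_Ioc_eq_integral_Ioo]
    rfl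
  rw [this]
  exact intervalIntegral.continuous_parametric_intervalIntegral_of_continuous'
    (continuous_latitude_integrand b L hL) _ _

/-- The weight depends only on the height, so its integral against `L` over a spherical cap
reduces to a one-dimensional one; since `L` is bounded, integrability of the weight suffices. -/
lemma cap_integral (b : OrthonormalBasis (Fin 3) ℝ E3) (L : E3 → ℝ)
    (hL : ContinuousOn L (Metric.sphere (0 : E3) 1)) (c : ℝ) (hw0 : 0 < c)
    (hint : IntegrableOn (fun u => u * (√(u ^ 2 - c ^ 2))⁻¹) (Ioo c 1)) :
    IntegrableOn (fun σ : Metric.sphere (0 : E3) 1 => ⟪b 0, (σ : E3)⟫ * L σ *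
        (√(⟪b 0, (σ : E3)⟫ ^ 2 - c ^ 2))⁻¹)
      {σ : Metric.sphere (0 : E3) 1 | c < ⟪b 0, (σ : E3)⟫} sphereMeasure ∧
    ∫ σ in {σ : Metric.sphere (0 : E3) 1 | c < ⟪b 0, (σ : E3)⟫}, ⟪b 0, (σ : E3)⟫ * L σ *
        (√(⟪b 0, (σ : E3)⟫ ^ 2 - c ^ 2))⁻¹ ∂sphereMeasure =
      ∫ u in Ioo c 1, u * (√(u ^ 2 - c ^ 2))⁻¹ * latitudeIntegral b L u := by
  have hmp := measurePreserving_spherePt b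
  have hLs : Continuous fun σ : Metric.sphere (0 : E3) 1 => L σ :=
    hL.comp_continuous continuous_subtype_val fun σ => σ.2
  have hl := continuous_latitude_integrand b L hL
  obtain ⟨C, hC⟩ : ∃ C : ℝ, ∀ σ : Metric.sphere (0 : E3) 1, ‖L σ‖ ≤ C := by
    obtain ⟨C, hC⟩ := isCompact_univ.exists_bound_of_continuousOn hLs.continuousOn
    exact ⟨C, fun σ => hC σ (mem_univ σ)⟩
  -- the domain of integration is absorbed in the weight
  set S : Set (Metric.sphere (0 : E3) 1) :=
    {σ | c < ⟪b 0, (σ : E3)⟫} with hS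
  set g : ℝ → ℝ := (Ioi (c)).indicator fun u => u * (√(u ^ 2 - (c) ^ 2))⁻¹ with hg
  have hSm : MeasurableSet S :=
    (isOpen_lt continuous_const (by fun_prop)).measurableSet
  have hind : S.indicator (fun σ : Metric.sphere (0 : E3) 1 => ⟪b 0, (σ : E3)⟫ * L σ *
      (√(⟪b 0, (σ : E3)⟫ ^ 2 - (c) ^ 2))⁻¹) =
      fun σ : Metric.sphere (0 : E3) 1 => g ⟪b 0, (σ : E3)⟫ * L σ := by
    funext σ
    by_cases h : c < ⟪b 0, (σ : E3)⟫
    · rw [indicator_of_mem (show σ ∈ S from h), hg,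
        indicator_of_mem (show ⟪b 0, (σ : E3)⟫ ∈ Ioi (c) from h)]
      ring
    · rw [indicator_of_notMem (show σ ∉ S from h), hg,
        indicator_of_notMem (show ⟪b 0, (σ : E3)⟫ ∉ Ioi (c) from h), zero_mul]
  have hgm : Measurable g := Measurable.indicator (by fun_prop) measurableSet_Ioi
  have hmR : Measurable fun σ : Metric.sphere (0 : E3) 1 => g ⟪b 0, (σ : E3)⟫ * L σ :=
    (hgm.comp (by fun_prop : Continuous fun σ : Metric.sphere (0 : E3) 1 =>
      ⟪b 0, (σ : E3)⟫).measurable).mul hLs.measurable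
  have hset : Ioi (c) ∩ Ioo (-1) 1 = Ioo (c) 1 := by
    ext u
    exact ⟨fun h => ⟨h.1, h.2.2⟩, fun h => ⟨h.1, by linarith [h.1], h.2⟩⟩
  have hgi : Integrable g (volume.restrict (Ioo (-1) 1)) := by
    rw [hg, integrable_indicator_iff measurableSet_Ioi, IntegrableOn,
      Measure.restrict_restrict measurableSet_Ioi, hset]
    exact hint
  have hcongr : (fun p : ℝ × ℝ => g ⟪b 0, (spherePt b (arccos p.1) p.2 : E3)⟫ *
        L (spherePt b (arccos p.1) p.2)) =ᵐ[(volume.restrict (Ioo (-1 : ℝ) 1)).prod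
          (volume.restrict (Ioo (-π) π))]
      fun p => g p.1 * L (spherePt b (arccos p.1) p.2) := by
    rw [Measure.prod_restrict]
    filter_upwards [ae_restrict_mem (measurableSet_Ioo.prod measurableSet_Ioo)] with p hp
    rw [inner_spherePt, cos_arccos hp.1.1.le hp.1.2.le]
  have hprodint : Integrable (fun p : ℝ × ℝ => g p.1 * L (spherePt b (arccos p.1) p.2))
      ((volume.restrict (Ioo (-1 : ℝ) 1)).prod (volume.restrict (Ioo (-π) π))) :=
    (hgi.comp_fst _).mul_bdd (c := C) hl.aestronglyMeasurable
      (Eventually.of_forall fun p => hC _)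
  have hRint : Integrable (fun σ : Metric.sphere (0 : E3) 1 => g ⟪b 0, (σ : E3)⟫ * L σ)
      sphereMeasure := by
    rw [← hmp.integrable_comp hmR.aestronglyMeasurable]
    exact hprodint.congr hcongr.symm
  have hRHS : ∫ σ : Metric.sphere (0 : E3) 1, g ⟪b 0, (σ : E3)⟫ * L σ ∂sphereMeasure =
      ∫ u in Ioo (c) 1, u * (√(u ^ 2 - (c) ^ 2))⁻¹ * latitudeIntegral b L u := by
    rw [← hmp.map_eq, integral_map hmp.measurable.aemeasurable hmR.aestronglyMeasurable,
      integral_congr_ae hcongr, integral_prod _ hprodint]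
    simp_rw [integral_const_mul]
    rw [← hset, inter_comm, ← setIntegral_indicator measurableSet_Ioi]
    refine integral_congr_ae (Eventually.of_forall fun u => ?_)
    simp only [hg, indicator_apply]
    split_ifs <;> simp [latitudeIntegral]
  refine ⟨?_, ?_⟩
  · rw [← integrable_indicator_iff hSm, hind]
    exact hRint
  · rw [← integral_indicator hSm, hind, hRHS]

/-- Projecting the sphere of radius `t` around `r • b 0` to the unit sphere preserves the
azimuth and sends height `z` to `(r + t z) / ρ`, where `ρ` is the distance to the origin. -/
lemma shifted_spherePt (b : OrthonormalBasis (Fin 3) ℝ E3) (t r : ℝ) (ht : 0 < t) (htr : t < r)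
    (z : ℝ) (hz : z ∈ Ioo (-1 : ℝ) 1) (φ : ℝ) :
    ‖r • b 0 + t • (spherePt b (arccos z) φ : E3)‖ = √(r ^ 2 + t ^ 2 + 2 * r * t * z) ∧
    (√(r ^ 2 + t ^ 2 + 2 * r * t * z))⁻¹ • (r • b 0 + t • (spherePt b (arccos z) φ : E3)) =
      spherePt b (arccos ((r + t * z) / √(r ^ 2 + t ^ 2 + 2 * r * t * z))) φ := by
  have hr : 0 < r := ht.trans htr
  have hq : 0 < r ^ 2 + t ^ 2 + 2 * r * t * z := by
    nlinarith [mul_pos (mul_pos hr ht) (by linarith [hz.1] : 0 < 1 + z), sq_pos_of_pos (sub_pos.2 htr)]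
  have hR := sqrt_pos.2 hq
  have hRsq := sq_sqrt hq.le
  have hnorm : ‖r • b 0 + t • (spherePt b (arccos z) φ : E3)‖ = √(r ^ 2 + t ^ 2 + 2 * r * t * z) := by
    rw [eq_comm, sqrt_eq_iff_mul_self_eq hq.le (norm_nonneg _), ← pow_two, norm_add_sq_real,
      inner_smul_left, inner_smul_right, inner_spherePt, cos_arccos hz.1.le hz.2.le,
      norm_smul, norm_smul, b.norm_eq_one, norm_eq_of_mem_sphere, norm_of_nonneg hr.le,
      norm_of_nonneg ht.le]
    simp
    ring
  refine ⟨hnorm, ?_⟩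
  clear hnorm
  generalize √(r ^ 2 + t ^ 2 + 2 * r * t * z) = ρ at *
  have hz2 : 0 < 1 - z ^ 2 := by nlinarith [hz.1, hz.2]
  have hv : 1 - ((r + t * z) / ρ) ^ 2 = (t * √(1 - z ^ 2) / ρ) ^ 2 := by
    rw [div_pow, div_pow, mul_pow, sq_sqrt hz2.le]
    field_simp
    linear_combination hRsq
  have hv1 : ((r + t * z) / ρ) ^ 2 ≤ 1 := by nlinarith [sq_nonneg (t * √(1 - z ^ 2) / ρ)]
  obtain ⟨hv2, hv3⟩ := abs_le.1 ((sq_le_one_iff_abs_le_one _).1 hv1)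
  simp only [spherePt]
  rw [cos_arccos hv2 hv3, cos_arccos hz.1.le hz.2.le, sin_arccos, sin_arccos, hv,
    sqrt_sq (by positivity)]
  module

/-- The Kirchhoff spherical mean as an integral over the height `z` along the axis. -/
lemma shifted_integral (b : OrthonormalBasis (Fin 3) ℝ E3) (L : E3 → ℝ)
    (hL : ContinuousOn L (Metric.sphere (0 : E3) 1)) (t r : ℝ) (ht : 0 < t) (htr : t < r) :
    sphereIntegral (fun σ => L (‖r • b 0 + t • σ‖⁻¹ • (r • b 0 + t • σ)) /
        ‖r • b 0 + t • σ‖ ^ 3) =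
      ∫ z in Ioo (-1 : ℝ) 1,
        latitudeIntegral b L ((r + t * z) / √(r ^ 2 + t ^ 2 + 2 * r * t * z)) /
          √(r ^ 2 + t ^ 2 + 2 * r * t * z) ^ 3 := by
  have hr : 0 < r := ht.trans htr
  have hmp := measurePreserving_spherePt b
  have : IsFiniteMeasure sphereMeasure := by unfold sphereMeasure; infer_instance
  have hne : ∀ σ : Metric.sphere (0 : E3) 1, r • b 0 + t • (σ : E3) ≠ 0 := by
    intro σ h
    have h1 : ‖r • b 0‖ = ‖t • (σ : E3)‖ := by rw [eq_neg_of_add_eq_zero_left h, norm_neg]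
    rw [norm_smul, norm_smul, b.norm_eq_one, norm_eq_of_mem_sphere, norm_of_nonneg hr.le,
      norm_of_nonneg ht.le] at h1
    linarith
  set f : Metric.sphere (0 : E3) 1 → ℝ := fun σ =>
    L (‖r • b 0 + t • (σ : E3)‖⁻¹ • (r • b 0 + t • (σ : E3))) / ‖r • b 0 + t • (σ : E3)‖ ^ 3 with hf
  have hfc : Continuous f := by
    have hn : ∀ σ : Metric.sphere (0 : E3) 1, ‖r • b 0 + t • (σ : E3)‖ ≠ 0 :=
      fun σ => norm_ne_zero_iff.2 (hne σ)
    refine Continuous.div (hL.comp_continuous ?_ fun σ => ?_) (by fun_prop)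
      fun σ => pow_ne_zero 3 (hn σ)
    · exact (Continuous.inv₀ (by fun_prop) hn).smul (by fun_prop)
    · rw [mem_sphere_zero_iff_norm, norm_smul, norm_inv, norm_norm, inv_mul_cancel₀ (hn σ)]
  have hfint : Integrable f sphereMeasure :=
    Integrable.of_bound hfc.aestronglyMeasurable _ (Eventually.of_forall fun σ =>
      (isCompact_univ.exists_bound_of_continuousOn hfc.continuousOn).choose_spec σ (mem_univ σ))
  have hfP : ∀ z ∈ Ioo (-1 : ℝ) 1, ∀ φ, f (spherePt b (arccos z) φ) =
      L (spherePt b (arccos ((r + t * z) / √(r ^ 2 + t ^ 2 + 2 * r * t * z))) φ) /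
        √(r ^ 2 + t ^ 2 + 2 * r * t * z) ^ 3 := by
    intro z hz φ
    obtain ⟨h1, h2⟩ := shifted_spherePt b t r ht htr z hz φ
    simp only [hf]
    rw [h1, h2]
  change ∫ σ, f σ ∂sphereMeasure = _
  have h1 := (hmp.integrable_comp hfc.aestronglyMeasurable).2 hfint
  rw [← hmp.map_eq, integral_map hmp.measurable.aemeasurable hfc.aestronglyMeasurable]
  refine (integral_prod _ h1).trans (setIntegral_congr_fun measurableSet_Ioo fun z hz => ?_)
  simp only [Function.comp, hfP z hz]
  rw [integral_div]
  rfl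

/-! ### The exterior formula -/

/-- Kirchhoff formula for homogeneous degree −3 initial velocity in
the exterior (the formula Ψ₂,₀^{ext}[L], Appendix B.1.3 of the paper).
The integral over the sphere of radius t centered at x = rω is expressed as
the integral over the unit sphere with Jacobian t². -/
theorem kirchhoff_exterior_degree_two
    (L : E3 → ℝ) (hL : ContinuousOn L (Metric.sphere (0 : E3) 1))
    (t r : ℝ) (ht : 0 < t) (htr : t < r)
    (ω : E3) (hω : ‖ω‖ = 1)
    (x : E3) (hx : x = r • ω)
    (z0 : ℝ) (hz0 : z0 = Real.sqrt (1 - (t / r) ^ 2)) :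
    IntegrableOn
      (fun σ : Metric.sphere (0 : E3) 1 =>
        ⟪ω, (σ : E3)⟫ * L σ * (Real.sqrt (⟪ω, (σ : E3)⟫ ^ 2 - z0 ^ 2))⁻¹)
      {σ : Metric.sphere (0 : E3) 1 | z0 < ⟪ω, (σ : E3)⟫} sphereMeasure ∧
    (1 / (4 * π * t)) * (t ^ 2 *
        sphereIntegral (fun σ => L (‖x + t • σ‖⁻¹ • (x + t • σ)) / ‖x + t • σ‖ ^ 3)) =
      (1 / (2 * π * (r ^ 2 - t ^ 2))) *
        ∫ σ in {σ : Metric.sphere (0 : E3) 1 | z0 < ⟪ω, (σ : E3)⟫},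
          ⟪ω, (σ : E3)⟫ * L σ * (Real.sqrt (⟪ω, (σ : E3)⟫ ^ 2 - z0 ^ 2))⁻¹ ∂sphereMeasure := by
  have hr : 0 < r := ht.trans htr
  have hgap : 0 < r ^ 2 - t ^ 2 := by nlinarith
  obtain ⟨w, hw, hw2⟩ : ∃ w : ℝ, 0 < w ∧ w ^ 2 = r ^ 2 - t ^ 2 :=
    ⟨√(r ^ 2 - t ^ 2), sqrt_pos.2 hgap, sq_sqrt hgap.le⟩
  have hz : z0 = w / r := by
    rw [hz0, show 1 - (t / r) ^ 2 = (w / r) ^ 2 by rw [div_pow, div_pow, hw2]; field_simp]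
    exact sqrt_sq (by positivity)
  clear hz0
  subst hz
  obtain ⟨b, hb⟩ : ∃ b : OrthonormalBasis (Fin 3) ℝ E3, b 0 = ω := by
    have hv : Orthonormal ℝ (({0} : Set (Fin 3)).domRestrict fun _ => ω) :=
      ⟨fun _ => hω, fun i j hij => absurd (Subsingleton.elim i j) hij⟩
    obtain ⟨b, hb⟩ := hv.exists_orthonormalBasis_extension_of_card_eq (by simp)
    exact ⟨b, hb 0 rfl⟩
  subst hb
  subst hx
  obtain ⟨hint, hsub⟩ := singular_weight_subst t r w ht htr hw hw2 (latitudeIntegral b L)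
  obtain ⟨h1, h2⟩ := cap_integral b L hL (w / r) (by positivity) hint
  refine ⟨h1, ?_⟩
  rw [h2, hsub, shifted_integral b L hL t r ht htr,
    chord_subst t r w ht htr hw hw2 _ (continuous_latitudeIntegral b L hL), ← hw2]
  field_simp
  norm_num
end
end

section
/- Let N: S² → ℝ be continuous and define Ψ₁[N](t,x) = (1/4π)∫_{S²} N(σ)/(t − ⟨σ,x⟩) dS(σ) for (t,x) in D = {(t,x) ∈ ℝ×ℝ³ : |x| < t}. Then Ψ₁[N] is smooth on D, satisfies the wave equation ∂ₜ²Ψ₁[N] = ΔΨ₁[N] on D, and is homogeneous of degree −1: Ψ₁[N](λt, λx) = λ^{−1}·Ψ₁[N](t,x) for all λ > 0 and (t,x) ∈ D. -/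
/-!
Write `ℓ_σ(t, x) = t - ⟪σ, x⟫`, a continuous linear form on `ℝ × E3` depending continuously on
`σ ∈ S²` and bounded below by `t - ‖x‖ > 0` on the cone interior `D`. For a continuous weight
`G : S² → W` with values in a normed space put `P n G p = ∫ (ℓ_σ p)⁻ⁿ • G σ dσ` (`coneIntegral` below).

Differentiating under the integral sign (`hasFDerivAt_coneIntegral`) shows that on `D` the
derivative of `P n G` is again of the form `P (n + 1) H`, where `H σ = -n ℓ_σ(·) G σ` is a
continuous weight with values in the linear maps into `W`. As `W` is arbitrary, induction on the
order of differentiability gives smoothness (`contDiffOn_coneIntegral`). For scalar weights,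
two derivatives in a direction `v` multiply the weight by `n (n + 1) ℓ_σ(v)²` and raise the
exponent by two; since `ℓ_σ(1, 0)² = 1 = ‖σ‖² = ∑ i, ℓ_σ(0, eᵢ)²`, the second time derivative
equals the Laplacian. Homogeneity is immediate from `ℓ_σ(c p) = c ℓ_σ(p)`.
-/


noncomputable section

open MeasureTheory Real Set Filter Topology Metric
open scoped RealInnerProductSpace Classical

instance : IsFiniteMeasure sphereMeasure := by
  unfold sphereMeasure; infer_instance

/-- The open forward cone `|x| < t` in `ℝ × ℝ³`. -/
def coneInt : Set (ℝ × E3) := {p | ‖p.2‖ < p.1}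

lemma isOpen_coneInt : IsOpen coneInt :=
  isOpen_lt (by fun_prop) (by fun_prop)

/-- The linear form `(t, x) ↦ t - ⟪σ, x⟫`. -/
def ell (σ : S2) : ℝ × E3 →L[ℝ] ℝ :=
  ContinuousLinearMap.fst ℝ ℝ E3 - (innerSL ℝ (σ : E3)).comp (ContinuousLinearMap.snd ℝ ℝ E3)

@[simp] lemma ell_apply (σ : S2) (p : ℝ × E3) : ell σ p = p.1 - ⟪(σ : E3), p.2⟫ := rfl

lemma continuous_ell : Continuous ell := by
  unfold ell
  fun_prop

lemma le_ell (σ : S2) (p : ℝ × E3) : p.1 - ‖p.2‖ ≤ ell σ p := by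
  have h := real_inner_le_norm (σ : E3) p.2
  have hσ : ‖(σ : E3)‖ = 1 := by simp
  rw [hσ, one_mul] at h
  rw [ell_apply]
  linarith

lemma ell_pos (σ : S2) {p : ℝ × E3} (hp : p ∈ coneInt) : 0 < ell σ p :=
  lt_of_lt_of_le (sub_pos.2 hp) (le_ell σ p)

lemma integrable_of_continuous {W : Type} [NormedAddCommGroup W] {f : S2 → W} (hf : Continuous f) :
    Integrable f sphereMeasure :=
  hf.integrable_of_hasCompactSupport (HasCompactSupport.of_compactSpace f)

section

variable {W : Type} [NormedAddCommGroup W] [NormedSpace ℝ W]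

/-- The superposition `∫ (t - ⟪σ, x⟫)⁻ⁿ • G σ dσ` of plane waves with weight `G`. -/
def coneIntegral (n : ℕ) (G : S2 → W) (p : ℝ × E3) : W :=
  ∫ σ, ((ell σ p)⁻¹ ^ n) • G σ ∂sphereMeasure

/-- The weight of the derivative of `coneIntegral n G`. -/
def derivWeight (n : ℕ) (G : S2 → W) (σ : S2) : ℝ × E3 →L[ℝ] W :=
  (-(n : ℝ)) • (ell σ).smulRight (G σ)

lemma continuous_derivWeight (n : ℕ) {G : S2 → W} (hG : Continuous G) :
    Continuous (derivWeight n G) := by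
  have := continuous_ell
  have h : Continuous fun σ => ContinuousLinearMap.smulRightL ℝ (ℝ × E3) W (ell σ) (G σ) := by
    fun_prop
  exact h.const_smul (-(n : ℝ))

lemma continuous_integrand (n : ℕ) {G : S2 → W} (hG : Continuous G) {p : ℝ × E3}
    (hp : p ∈ coneInt) : Continuous fun σ => ((ell σ p)⁻¹ ^ n) • G σ := by
  have h : Continuous fun σ => ell σ p := continuous_ell.clm_apply continuous_const
  exact ((h.inv₀ fun σ => (ell_pos σ hp).ne').pow n).smul hG

lemma hasFDerivAt_integrand (n : ℕ) (G : S2 → W) (σ : S2) {p : ℝ × E3} (hp : p ∈ coneInt) :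
    HasFDerivAt (fun q => ((ell σ q)⁻¹ ^ n) • G σ)
      (((ell σ p)⁻¹ ^ (n + 1)) • derivWeight n G σ) p := by
  have hne := (ell_pos σ hp).ne'
  have h1 : HasDerivAt (fun y : ℝ => y⁻¹ ^ n) (-(n : ℝ) * (ell σ p)⁻¹ ^ (n + 1)) (ell σ p) := by
    convert! (hasDerivAt_inv hne).pow n using 1
    rcases n with _ | n
    · simp
    · push_cast
      rw [← inv_pow]
      ring
  have h2 := (h1.comp_hasFDerivAt p (ell σ).hasFDerivAt).smul_const (G σ)
  convert! h2 using 1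
  ext v <;> simp [derivWeight, smul_smul] <;> ring_nf

lemma hasFDerivAt_coneIntegral (n : ℕ) {G : S2 → W} (hG : Continuous G)
    {p : ℝ × E3} (hp : p ∈ coneInt) :
    HasFDerivAt (coneIntegral n G) (coneIntegral (n + 1) (derivWeight n G) p) p := by
  have hH := continuous_derivWeight n hG
  obtain ⟨C, hC⟩ := isCompact_univ.exists_bound_of_continuousOn hH.continuousOn
  -- Near `p` all the forms `ell σ` stay above half of `t - ‖x‖`, uniformly in `σ`.
  set δ : ℝ := (p.1 - ‖p.2‖) / 2 with hδ
  have hp' : ‖p.2‖ < p.1 := hp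
  have hδ0 : 0 < δ := by rw [hδ]; linarith
  have hsub : ∀ q ∈ {q : ℝ × E3 | δ < q.1 - ‖q.2‖}, q ∈ coneInt := fun q hq => by
    have : δ < q.1 - ‖q.2‖ := hq
    show ‖q.2‖ < q.1
    linarith
  have hs : {q : ℝ × E3 | δ < q.1 - ‖q.2‖} ∈ 𝓝 p := by
    refine (isOpen_lt (by fun_prop) (by fun_prop)).mem_nhds ?_
    show δ < p.1 - ‖p.2‖
    rw [hδ]; linarith
  refine hasFDerivAt_integral_of_dominated_of_fderiv_le
    (F' := fun q σ => ((ell σ q)⁻¹ ^ (n + 1)) • derivWeight n G σ)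
    (bound := fun _ => δ⁻¹ ^ (n + 1) * C) hs ?_
    (integrable_of_continuous (continuous_integrand n hG hp))
    (integrable_of_continuous (continuous_integrand (n + 1) hH hp)).aestronglyMeasurable
    ?_ (integrable_const _) ?_
  · filter_upwards [isOpen_coneInt.mem_nhds hp] with q hq
    exact (integrable_of_continuous (continuous_integrand n hG hq)).aestronglyMeasurable
  · refine ae_of_all _ fun σ q hq => ?_
    have h0 := ell_pos σ (hsub q hq)
    have h1 : δ ≤ ell σ q := le_trans (le_of_lt hq) (le_ell σ q)
    rw [norm_smul, norm_pow, norm_inv, Real.norm_of_nonneg h0.le]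
    gcongr
    exact hC σ (mem_univ σ)
  · exact ae_of_all _ fun σ q hq => hasFDerivAt_integrand n G σ (hsub q hq)

/-- The derivative of a `coneIntegral` is a `coneIntegral` with values in a larger space, so the
induction on `k` has to quantify over the space `W`. -/
lemma contDiffOn_coneIntegral (k : ℕ) : ∀ {W : Type} [NormedAddCommGroup W] [NormedSpace ℝ W]
    (n : ℕ) {G : S2 → W}, Continuous G → ContDiffOn ℝ k (coneIntegral n G) coneInt := by
  induction k with
  | zero =>
    intro W _ _ n G hG
    exact contDiffOn_zero.2 fun p hp =>
      (hasFDerivAt_coneIntegral n hG hp).continuousAt.continuousWithinAt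
  | succ k ih =>
    intro W _ _ n G hG
    push_cast
    rw [contDiffOn_succ_iff_hasFDerivWithinAt_of_uniqueDiffOn isOpen_coneInt.uniqueDiffOn]
    exact ⟨by simp, _, ih (n + 1) (continuous_derivWeight n hG), fun p hp =>
      (hasFDerivAt_coneIntegral n hG hp).hasFDerivWithinAt⟩

end

lemma coneIntegral_derivWeight_apply (n : ℕ) {G : S2 → ℝ} (hG : Continuous G)
    {p : ℝ × E3} (hp : p ∈ coneInt) (v : ℝ × E3) :
    coneIntegral (n + 1) (derivWeight n G) p v =
      coneIntegral (n + 1) (fun σ => -(n : ℝ) * (ell σ v * G σ)) p := by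
  unfold coneIntegral
  rw [ContinuousLinearMap.integral_apply (integrable_of_continuous
    (continuous_integrand (n + 1) (continuous_derivWeight n hG) hp))]
  rfl

lemma continuous_dirWeight (n : ℕ) {G : S2 → ℝ} (hG : Continuous G) (v : ℝ × E3) :
    Continuous fun σ => -(n : ℝ) * (ell σ v * G σ) := by
  have h : Continuous fun σ => ell σ v := continuous_ell.clm_apply continuous_const
  fun_prop

lemma deriv_coneIntegral (n : ℕ) {G : S2 → ℝ} (hG : Continuous G) (a : ℝ)
    {t : ℝ} {x : E3} (hp : (t, x) ∈ coneInt) :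
    deriv (fun s => a * coneIntegral n G (s, x)) t =
      a * coneIntegral (n + 1) (fun σ => -(n : ℝ) * (ell σ (1, 0) * G σ)) (t, x) := by
  have h := (hasFDerivAt_coneIntegral n hG hp).comp_hasDerivAt t
    ((hasDerivAt_id t).prodMk (hasDerivAt_const t x))
  rw [coneIntegral_derivWeight_apply n hG hp] at h
  exact (h.const_mul a).deriv

lemma pd_coneIntegral (n : ℕ) {G : S2 → ℝ} (hG : Continuous G) (a : ℝ) (i : Fin 3)
    {t : ℝ} {x : E3} (hp : (t, x) ∈ coneInt) :
    pd i (fun y => a * coneIntegral n G (t, y)) x =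
      a * coneIntegral (n + 1)
        (fun σ => -(n : ℝ) * (ell σ (0, EuclideanSpace.single i 1) * G σ)) (t, x) := by
  have h := ((hasFDerivAt_coneIntegral n hG hp).comp x
    ((hasFDerivAt_const t x).prodMk (hasFDerivAt_id x))).const_mul a
  rw [← coneIntegral_derivWeight_apply n hG hp]
  unfold pd
  erw [h.fderiv]
  rfl

lemma dt2_coneIntegral (n : ℕ) {G : S2 → ℝ} (hG : Continuous G) (a : ℝ)
    {t : ℝ} {x : E3} (hp : (t, x) ∈ coneInt) :
    dt2 (fun s y => a * coneIntegral n G (s, y)) t x =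
      a * coneIntegral (n + 2) (fun σ => (n * (n + 1) : ℝ) * G σ) (t, x) := by
  have hev : (fun s => deriv (fun u => a * coneIntegral n G (u, x)) s) =ᶠ[𝓝 t] fun s =>
      a * coneIntegral (n + 1) (fun σ => -(n : ℝ) * (ell σ (1, 0) * G σ)) (s, x) := by
    have hc : ContinuousAt (fun s : ℝ => (s, x)) t := by fun_prop
    filter_upwards [hc (isOpen_coneInt.mem_nhds hp)] with s hs
    exact deriv_coneIntegral n hG a hs
  unfold dt2
  rw [hev.deriv_eq, deriv_coneIntegral (n + 1) (continuous_dirWeight n hG _) a hp]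
  congr 2
  ext σ
  simp
  ring

lemma pd_pd_coneIntegral (n : ℕ) {G : S2 → ℝ} (hG : Continuous G) (a : ℝ) (i : Fin 3)
    {t : ℝ} {x : E3} (hp : (t, x) ∈ coneInt) :
    pd i (pd i (fun y => a * coneIntegral n G (t, y))) x =
      a * coneIntegral (n + 2)
        (fun σ => (n * (n + 1) : ℝ) * ((σ : E3) i ^ 2 * G σ)) (t, x) := by
  have hev : pd i (fun y => a * coneIntegral n G (t, y)) =ᶠ[𝓝 x] fun y =>
      a * coneIntegral (n + 1)
        (fun σ => -(n : ℝ) * (ell σ (0, EuclideanSpace.single i 1) * G σ)) (t, y) := by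
    have hc : ContinuousAt (fun y : E3 => (t, y)) x := by fun_prop
    filter_upwards [hc (isOpen_coneInt.mem_nhds hp)] with y hy
    exact pd_coneIntegral n hG a i hy
  have h1 := pd_coneIntegral (n + 1)
    (continuous_dirWeight n hG (0, EuclideanSpace.single i 1)) a i hp
  have h2 : pd i (pd i (fun y => a * coneIntegral n G (t, y))) x = pd i (fun y =>
      a * coneIntegral (n + 1)
        (fun σ => -(n : ℝ) * (ell σ (0, EuclideanSpace.single i 1) * G σ)) (t, y)) x := by
    exact congrArg (fun L : E3 →L[ℝ] ℝ => L (EuclideanSpace.single i 1)) hev.fderiv_eq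
  rw [h2, h1]
  congr 2
  ext σ
  simp only [ell_apply, EuclideanSpace.inner_single_right]
  simp
  ring

lemma lap3_coneIntegral (n : ℕ) {G : S2 → ℝ} (hG : Continuous G) (a : ℝ)
    {t : ℝ} {x : E3} (hp : (t, x) ∈ coneInt) :
    lap3 (fun y => a * coneIntegral n G (t, y)) x =
      a * coneIntegral (n + 2) (fun σ => (n * (n + 1) : ℝ) * G σ) (t, x) := by
  unfold lap3
  simp_rw [pd_pd_coneIntegral n hG a _ hp]
  rw [← Finset.mul_sum]
  congr 1
  unfold coneIntegral
  rw [← integral_finsetSum]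
  · congr 1
    ext σ
    have hσ : ∑ i : Fin 3, (σ : E3) i ^ 2 = 1 := by
      rw [← EuclideanSpace.real_norm_sq_eq]
      have : ‖(σ : E3)‖ = 1 := by simp
      simp [this]
    rw [← Finset.smul_sum, ← Finset.mul_sum, ← Finset.sum_mul, hσ, one_mul]
  · intro i _
    refine integrable_of_continuous (continuous_integrand (n + 2) ?_ hp)
    fun_prop

/-- the interior homogeneous solution Ψ₁[N] (Section 2 of the paper)
is smooth on D = {|x| < t}, solves the wave equation there, and is homogeneous
of degree −1. -/
theorem interior_homogeneous_degree_one
    (N : E3 → ℝ) (hN : ContinuousOn N (Metric.sphere (0 : E3) 1))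
    (Ψ : ℝ → E3 → ℝ)
    (hΨ : ∀ (t : ℝ) (x : E3),
      Ψ t x = (1 / (4 * π)) * sphereIntegral (fun σ => N σ / (t - ⟪σ, x⟫))) :
    ContDiffOn ℝ (⊤ : ℕ∞) (fun p : ℝ × E3 => Ψ p.1 p.2) {p : ℝ × E3 | ‖p.2‖ < p.1} ∧
    (∀ (t : ℝ) (x : E3), ‖x‖ < t → dt2 Ψ t x = lap3 (Ψ t) x) ∧
    (∀ c : ℝ, 0 < c → ∀ (t : ℝ) (x : E3), ‖x‖ < t →
      Ψ (c * t) (c • x) = c⁻¹ * Ψ t x) := by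
  have hG : Continuous fun σ : S2 => N σ := hN.domRestrict
  have hΨ' : Ψ = fun t x => (1 / (4 * π)) * coneIntegral 1 (fun σ => N σ) (t, x) := by
    ext t x
    rw [hΨ]
    congr 1
    unfold sphereIntegral coneIntegral
    congr 1
    ext σ
    simp [div_eq_inv_mul]
  refine ⟨?_, ?_, ?_⟩
  · rw [hΨ']
    refine contDiffOn_infty.2 fun k => ?_
    exact contDiffOn_const.mul (contDiffOn_coneIntegral k 1 hG)
  · intro t x hx
    rw [hΨ', dt2_coneIntegral 1 hG _ hx, lap3_coneIntegral 1 hG _ hx]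
  · intro c hc t x _
    have h : coneIntegral 1 (fun σ => N σ) (c * t, c • x) =
        c⁻¹ * coneIntegral 1 (fun σ => N σ) (t, x) := by
      unfold coneIntegral
      rw [← integral_const_mul]
      congr 1
      ext σ
      have : ell σ (c * t, c • x) = c * ell σ (t, x) := (ell σ).map_smul c (t, x)
      rw [this]
      simp only [pow_one, smul_eq_mul, mul_inv, mul_assoc]
    simp only [hΨ', h]
    ring
end
end

section
/- Let N: S² → ℝ be twice continuously differentiable (i.e. its degree-zero homogeneous extension x ↦ N(x/|x|) is C² on ℝ³∖{0}) and let ω ∈ S². Then the function σ ↦ (N(σ) − N(ω))/(1 − ⟨σ,ω⟩) is integrable on S² with respect to dS, and lim_{s→1⁺} [ (1/4π)∫_{S²} N(σ)/(s − ⟨σ,ω⟩) dS(σ) − (N(ω)/2)·ln((s+1)/(s−1)) ] = (1/4π)∫_{S²} (N(σ) − N(ω))/(1 − ⟨σ,ω⟩) dS(σ). -/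
/-!
Writing `u = ⟪σ, ω⟫` and `N σ = (N σ - N ω) + N ω`, the integral over the sphere splits as
`∫ (N σ - N ω) / (s - u) dS + N ω * ∫ 1 / (s - u) dS`.

By Archimedes' theorem (`map_height`) the pushforward of `dS` under `u` is `2π du` on `[-1, 1]`.
Hence the second integral is exactly `2π log ((s + 1) / (s - 1))` (`integral_inv_height`), which is
the subtracted logarithmic term, and `(1 - u) ^ (-1/2)` is integrable (`integrable_rpow_height`).
As `N` is Lipschitz at `ω` and `‖σ - ω‖ = √(2 (1 - u))`, the quotient `(N σ - N ω) / (1 - u)` is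
bounded by a multiple of `(1 - u) ^ (-1/2)` (`integrable_quotient`). It dominates
`(N σ - N ω) / (s - u)` for every `s > 1`, so dominated convergence gives the limit.

Archimedes' theorem is obtained from moments: evaluating `∫ ⟪x, ω⟫ ^ k * exp (-‖x‖ ^ 2)` over the
whole space both in polar coordinates (`sphere_polar`) and as a product of one-dimensional Gaussian
integrals (`gauss_prod`) gives `∫ u ^ k dS = 2π ∫_{-1}^1 u ^ k du` (`sphere_moment`), and a finite
measure on a compact interval is determined by its moments (`measure_ext_of_moments`).
-/

noncomputable section

open MeasureTheory Real Set Filter Topology Metric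
open scoped RealInnerProductSpace Classical

/-! ### Moments of the height function on the sphere -/

/-- Polar coordinates for the Gaussian-weighted `k`-th moment of a linear coordinate: the factor
`r ^ (k + 2)` combines the homogeneity of `⟪x, ω⟫ ^ k` with the Jacobian `r ^ 2`. -/
theorem sphere_polar (ω : E3) (k : ℕ) :
    ∫ x : E3, ⟪x, ω⟫ ^ k * rexp (-‖x‖ ^ 2) =
      (∫ σ : Metric.sphere (0 : E3) 1, ⟪(σ : E3), ω⟫ ^ k ∂sphereMeasure) *
        ∫ r in Ioi (0 : ℝ), r ^ (k + 2) * rexp (-r ^ 2) := by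
  have hdim : Module.finrank ℝ E3 = 3 := by simp
  calc
    _ = ∫ x : ({(0)}ᶜ : Set E3), ⟪x.1, ω⟫ ^ k * rexp (-‖x.1‖ ^ 2) ∂(volume.comap (Subtype.val : ({(0)}ᶜ : Set E3) → E3)) := by
      rw [integral_subtype_comap (measurableSet_singleton _).compl
        fun x : E3 ↦ ⟪x, ω⟫ ^ k * rexp (-‖x‖ ^ 2), restrict_compl_singleton]
    _ = ∫ x : Metric.sphere (0 : E3) 1 × Ioi (0 : ℝ),
          ⟪(x.1 : E3), ω⟫ ^ k * (x.2.1 ^ k * rexp (-x.2.1 ^ 2))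
          ∂((volume : Measure E3).toSphere.prod (.volumeIoiPow (Module.finrank ℝ E3 - 1))) := by
      rw [← (volume : Measure E3).measurePreserving_homeomorphUnitSphereProd.integral_comp
        (Homeomorph.measurableEmbedding _)]
      refine integral_congr_ae (.of_forall fun x ↦ ?_)
      have hx : ‖x.1‖ ≠ 0 := norm_ne_zero_iff.2 x.2
      simp only [homeomorphUnitSphereProd_apply_fst_coe, homeomorphUnitSphereProd_apply_snd_coe,
        real_inner_smul_left]
      rw [mul_pow, ← mul_assoc, mul_right_comm _ _ (‖x.1‖ ^ k), ← mul_pow, inv_mul_cancel₀ hx]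
      simp
    _ = _ := by
      rw [integral_prod_mul (fun σ : Metric.sphere (0 : E3) 1 ↦ ⟪(σ : E3), ω⟫ ^ k)
        (fun r : Ioi (0 : ℝ) ↦ r.1 ^ k * rexp (-r.1 ^ 2)), hdim]
      congr 1
      simp only [Measure.volumeIoiPow, ENNReal.ofReal]
      rw [integral_withDensity_eq_integral_smul
          ((measurable_subtype_coe.pow_const _).real_toNNReal),
        integral_subtype_comap measurableSet_Ioi
          fun a : ℝ ↦ Real.toNNReal (a ^ (3 - 1)) • (a ^ k * rexp (-a ^ 2))]
      refine setIntegral_congr_fun measurableSet_Ioi fun x hx ↦ ?_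
      rw [NNReal.smul_def, Real.coe_toNNReal _ (pow_nonneg (le_of_lt hx) _), smul_eq_mul]
      ring

/-- The Gaussian moment of `sphere_polar` in Cartesian coordinates with first axis `ω`. The two
remaining axes contribute `√π` each. -/
theorem gauss_prod (ω : E3) (hω : ‖ω‖ = 1) (k : ℕ) :
    ∫ x : E3, ⟪x, ω⟫ ^ k * rexp (-‖x‖ ^ 2) = (∫ x : ℝ, x ^ k * rexp (-x ^ 2)) * π := by
  obtain ⟨b, hb⟩ : ∃ b : OrthonormalBasis (Fin 3) ℝ E3, b 0 = ω := by
    obtain ⟨b, hb⟩ := Orthonormal.exists_orthonormalBasis_extension_of_card_eq (𝕜 := ℝ) (E := E3)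
      (ι := Fin 3) (by simp) (v := fun _ ↦ ω) (s := {0}) (by
        rw [orthonormal_subsingleton_iff]; simp [hω])
    exact ⟨b, hb 0 rfl⟩
  have hg : ∫ x : ℝ, rexp (-x ^ 2) = √π := by simpa using integral_gaussian 1
  calc
    _ = ∫ y : EuclideanSpace ℝ (Fin 3), (y 0) ^ k * rexp (-‖y‖ ^ 2) := by
      rw [← b.measurePreserving_repr.integral_comp
        b.repr.toHomeomorph.measurableEmbedding
        (fun y : EuclideanSpace ℝ (Fin 3) ↦ (y 0) ^ k * rexp (-‖y‖ ^ 2))]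
      refine integral_congr_ae (.of_forall fun x ↦ ?_)
      simp only [LinearIsometryEquiv.norm_map, b.repr_apply_apply x 0, hb, real_inner_comm x ω]
    _ = ∫ y : Fin 3 → ℝ, (y 0) ^ k * rexp (-‖WithLp.toLp 2 y‖ ^ 2) := by
      rw [← (PiLp.volume_preserving_toLp (Fin 3)).integral_comp
        (MeasurableEquiv.toLp 2 (Fin 3 → ℝ)).measurableEmbedding]
    _ = ∫ y : Fin 3 → ℝ, ∏ i, (![fun x : ℝ ↦ x ^ k * rexp (-x ^ 2), fun x ↦ rexp (-x ^ 2),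
          fun x ↦ rexp (-x ^ 2)] : Fin 3 → ℝ → ℝ) i (y i) := by
      refine integral_congr_ae (.of_forall fun y ↦ ?_)
      simp only [EuclideanSpace.norm_sq_eq, Fin.prod_univ_three, Fin.sum_univ_three]
      simp [Real.exp_add]
      ring
    _ = _ := by
      rw [integral_fintype_prod_volume_eq_prod]
      simp only [Fin.prod_univ_three]
      simp [hg, mul_assoc, Real.mul_self_sqrt pi_pos.le]

/-- Comparing the two evaluations of the Gaussian moment: for even `k` the factor `Γ((k + 1) / 2)`
cancels and the height function has the moments of `2π du` on `[-1, 1]`; for odd `k` both vanish. -/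
theorem sphere_moment (ω : E3) (hω : ‖ω‖ = 1) (k : ℕ) :
    ∫ σ : Metric.sphere (0 : E3) 1, ⟪(σ : E3), ω⟫ ^ k ∂sphereMeasure =
      2 * π * ∫ u in (-1 : ℝ)..1, u ^ k := by
  have h := (sphere_polar ω k).symm.trans (gauss_prod ω hω k)
  have hI : ∀ j : ℕ, ∫ r in Ioi (0 : ℝ), r ^ j * rexp (-r ^ 2) =
      1 / 2 * Real.Gamma ((j + 1) / 2) := fun j ↦ by
    have := integral_rpow_mul_exp_neg_rpow (p := 2) (q := j) two_pos
      (by linarith [j.cast_nonneg (α := ℝ)])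
    simpa using this
  have hG : 0 < Real.Gamma (((k : ℝ) + 1) / 2) := Real.Gamma_pos_of_pos (by positivity)
  have hG' : Real.Gamma ((((k + 2 : ℕ) : ℝ) + 1) / 2) =
      ((k : ℝ) + 1) / 2 * Real.Gamma (((k : ℝ) + 1) / 2) := by
    rw [← Real.Gamma_add_one (by positivity)]
    congr 1; push_cast; ring
  rw [hI, hG'] at h
  rw [integral_pow]
  have hk : (k : ℝ) + 1 ≠ 0 := by positivity
  rcases Nat.even_or_odd k with he | ho
  · have hJ : ∫ x : ℝ, x ^ k * rexp (-x ^ 2) = Real.Gamma (((k : ℝ) + 1) / 2) := by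
      have := integral_comp_abs (f := fun x : ℝ ↦ x ^ k * rexp (-x ^ 2))
      simp only [he.pow_abs, sq_abs] at this
      rw [this, hI]; ring
    rw [hJ] at h
    rw [he.add_one.neg_one_pow]
    field_simp
    field_simp at h
    rw [one_pow]
    linarith
  · have hJ : ∫ x : ℝ, x ^ k * rexp (-x ^ 2) = 0 := by
      have := integral_neg_eq_self (fun x : ℝ ↦ x ^ k * rexp (-x ^ 2)) volume
      simp only [ho.neg_pow, neg_sq, neg_mul, integral_neg] at this
      linarith
    rw [hJ, zero_mul] at h
    rw [ho.add_one.neg_one_pow]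
    have : (1 / 2 * (((k : ℝ) + 1) / 2 * Real.Gamma (((k : ℝ) + 1) / 2))) ≠ 0 := by positivity
    rw [(mul_eq_zero.1 h).resolve_right this]
    simp

/-! ### Archimedes' theorem -/

/-- Uniqueness in the Hausdorff moment problem, by Weierstrass approximation. -/
theorem measure_ext_of_moments {μ ν : Measure ℝ} [IsFiniteMeasure μ] [IsFiniteMeasure ν] {a b : ℝ}
    (hμ : ∀ᵐ x ∂μ, x ∈ Icc a b) (hν : ∀ᵐ x ∂ν, x ∈ Icc a b)
    (h : ∀ k : ℕ, ∫ x, x ^ k ∂μ = ∫ x, x ^ k ∂ν) : μ = ν := by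
  have hint : ∀ {ρ : Measure ℝ} [IsFiniteMeasure ρ], (∀ᵐ x ∂ρ, x ∈ Icc a b) →
      ∀ f : ℝ → ℝ, Continuous f → Integrable f ρ := by
    intro ρ _ hρ f hf
    rw [← Measure.restrict_eq_self_of_ae_mem hρ]
    exact hf.continuousOn.integrableOn_compact isCompact_Icc
  have hpoly : ∀ p : Polynomial ℝ, ∫ x, p.eval x ∂μ = ∫ x, p.eval x ∂ν := by
    intro p
    simp only [Polynomial.eval_eq_sum_range]
    rw [integral_finsetSum _ fun i _ ↦ hint hμ _ (by fun_prop),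
      integral_finsetSum _ fun i _ ↦ hint hν _ (by fun_prop)]
    simp only [integral_const_mul, h]
  refine ext_of_forall_integral_eq_of_IsFiniteMeasure fun f ↦ ?_
  have key : ∀ ε > 0, |∫ x, f x ∂μ - ∫ x, f x ∂ν| ≤ ε * (μ.real univ + ν.real univ) := by
    intro ε hε
    obtain ⟨p, hp⟩ := exists_polynomial_near_of_continuousOn a b f f.continuous.continuousOn ε hε
    have hb : ∀ {ρ : Measure ℝ} [IsFiniteMeasure ρ], (∀ᵐ x ∂ρ, x ∈ Icc a b) →
        |∫ x, p.eval x ∂ρ - ∫ x, f x ∂ρ| ≤ ε * ρ.real univ := by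
      intro ρ _ hρ
      rw [← integral_sub (hint hρ _ p.continuous) (hint hρ _ f.continuous)]
      exact norm_integral_le_of_norm_le_const (f := fun x ↦ p.eval x - f x)
        (hρ.mono fun x hx ↦ (hp x hx).le)
    have h1 := abs_le.1 (hb hμ)
    have h2 := abs_le.1 (hb hν)
    rw [hpoly] at h1
    rw [abs_le]
    constructor <;> linarith [h1.1, h1.2, h2.1, h2.2]
  have hlim : Tendsto (fun ε : ℝ ↦ ε * (μ.real univ + ν.real univ)) (𝓝[>] 0) (𝓝 0) := by
    have : Tendsto (fun ε : ℝ ↦ ε * (μ.real univ + ν.real univ)) (𝓝 0) (𝓝 (0 * _)) :=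
      tendsto_id.mul_const _
    rw [zero_mul] at this
    exact this.mono_left nhdsWithin_le_nhds
  have := ge_of_tendsto hlim (eventually_mem_nhdsWithin.mono key)
  exact sub_eq_zero.1 (abs_nonpos_iff.1 this)

theorem continuous_height (ω : E3) :
    Continuous fun σ : Metric.sphere (0 : E3) 1 ↦ ⟪(σ : E3), ω⟫ := by fun_prop

theorem height_mem {ω : E3} (hω : ‖ω‖ = 1) (σ : Metric.sphere (0 : E3) 1) :
    ⟪(σ : E3), ω⟫ ∈ Icc (-1 : ℝ) 1 := by
  have := abs_real_inner_le_norm (σ : E3) ω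
  simpa [hω, abs_le] using this

/-- Archimedes' theorem: the height `⟪σ, ω⟫` of a point of the unit sphere is distributed
according to `2π du` on `[-1, 1]`. -/
theorem map_height {ω : E3} (hω : ‖ω‖ = 1) :
    sphereMeasure.map (fun σ : Metric.sphere (0 : E3) 1 ↦ ⟪(σ : E3), ω⟫) =
      ENNReal.ofReal (2 * π) • volume.restrict (Icc (-1 : ℝ) 1) := by
  have hm := (continuous_height ω).measurable
  have : IsFiniteMeasure (ENNReal.ofReal (2 * π) • volume.restrict (Icc (-1 : ℝ) 1)) :=
    Measure.smul_finite _ ENNReal.ofReal_ne_top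
  refine measure_ext_of_moments (a := -1) (b := 1) ?_ ?_ fun k ↦ ?_
  · refine (ae_map_iff hm.aemeasurable measurableSet_Icc).2 ?_
    exact .of_forall (height_mem hω)
  · exact Measure.ae_smul_measure (ae_restrict_mem measurableSet_Icc) _
  · rw [integral_map hm.aemeasurable (by fun_prop), sphere_moment ω hω, integral_smul_measure,
      integral_Icc_eq_integral_Ioc, intervalIntegral.integral_of_le (by norm_num),
      ENNReal.toReal_ofReal (by positivity), smul_eq_mul]

/-! ### Integrals of functions of the height -/

theorem integral_inv_height {ω : E3} (hω : ‖ω‖ = 1) {s : ℝ} (hs : 1 < s) :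
    ∫ σ : Metric.sphere (0 : E3) 1, 1 / (s - ⟪(σ : E3), ω⟫) ∂sphereMeasure =
      2 * π * Real.log ((s + 1) / (s - 1)) := by
  have hm := (continuous_height ω).measurable
  rw [← integral_map (f := fun u ↦ 1 / (s - u)) hm.aemeasurable
      (by measurability : Measurable fun u : ℝ ↦ 1 / (s - u)).aestronglyMeasurable,
    map_height hω, integral_smul_measure, integral_Icc_eq_integral_Ioc,
    ← intervalIntegral.integral_of_le (by norm_num), ENNReal.toReal_ofReal (by positivity),
    smul_eq_mul, intervalIntegral.integral_comp_sub_left (fun u ↦ 1 / u),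
    integral_one_div_of_pos (by linarith) (by linarith), sub_neg_eq_add]

theorem integrable_rpow_height {ω : E3} (hω : ‖ω‖ = 1) :
    Integrable (fun σ : Metric.sphere (0 : E3) 1 ↦ (1 - ⟪(σ : E3), ω⟫) ^ (-(1 / 2) : ℝ))
      sphereMeasure := by
  have hm := (continuous_height ω).measurable
  have h : IntervalIntegrable (fun u : ℝ ↦ (1 - u) ^ (-(1 / 2) : ℝ)) volume (-1) 1 := by
    have := (intervalIntegral.intervalIntegrable_rpow' (a := 0) (b := 2)
      (r := -(1 / 2)) (by norm_num)).comp_sub_left 1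
    norm_num at this ⊢
    exact this.symm
  rw [intervalIntegrable_iff_integrableOn_Icc_of_le (by norm_num)] at h
  have h2 : Integrable (fun u : ℝ ↦ (1 - u) ^ (-(1 / 2) : ℝ))
      (sphereMeasure.map (fun σ : Metric.sphere (0 : E3) 1 ↦ ⟪(σ : E3), ω⟫)) := by
    rw [map_height hω]
    exact h.smul_measure ENNReal.ofReal_ne_top
  exact h2.comp_measurable hm

/-! ### Integrability of the quotient -/

/-- A Lipschitz bound for `N` based at the single point `ω`: differentiability at `ω` gives it near
`ω`, and boundedness of `N` on the sphere gives it away from `ω`. -/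
theorem lipschitz_at {N : E3 → ℝ} (hN : ContDiffOn ℝ 2 N {x : E3 | x ≠ 0})
    {ω : E3} (hω : ‖ω‖ = 1) :
    ∃ C, 0 ≤ C ∧ ∀ σ : Metric.sphere (0 : E3) 1, |N σ - N ω| ≤ C * ‖(σ : E3) - ω‖ := by
  have hopen : IsOpen {x : E3 | x ≠ 0} := isOpen_ne
  have hω0 : ω ≠ 0 := by rintro rfl; simp at hω
  have hd : DifferentiableAt ℝ N ω :=
    (hN.contDiffAt (hopen.mem_nhds hω0)).differentiableAt (by norm_num)
  obtain ⟨c, hc⟩ := hd.hasFDerivAt.isBigO_sub.bound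
  obtain ⟨δ, hδ, hball⟩ := Metric.eventually_nhds_iff.1 hc
  obtain ⟨M, hM⟩ := (isCompact_sphere (0 : E3) 1).exists_bound_of_continuousOn
    (f := fun x ↦ N x - N ω)
    ((hN.continuousOn.mono fun x hx ↦ by
      rintro rfl; simp at hx).sub continuousOn_const)
  refine ⟨max (max c (M / δ)) 0, le_max_right _ _, fun σ ↦ ?_⟩
  by_cases h : dist (σ : E3) ω < δ
  · exact (hball h).trans (by gcongr; exact (le_max_left _ _).trans (le_max_left _ _))
  · have h1 := hM σ σ.2
    rw [not_lt, dist_eq_norm] at h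
    have hM0 : 0 ≤ M := (norm_nonneg _).trans h1
    calc |N σ - N ω| ≤ M := h1
      _ = M / δ * δ := by field_simp
      _ ≤ M / δ * ‖(σ : E3) - ω‖ := by gcongr
      _ ≤ _ := by gcongr; exact (le_max_right _ _).trans (le_max_left _ _)

theorem norm_sub_sq_height {ω : E3} (hω : ‖ω‖ = 1) (σ : Metric.sphere (0 : E3) 1) :
    ‖(σ : E3) - ω‖ ^ 2 = 2 * (1 - ⟪(σ : E3), ω⟫) := by
  rw [norm_sub_sq_real, hω]
  simp
  ring

/-- The denominator `1 - ⟪σ, ω⟫` vanishes only at `σ = ω`, where the numerator vanishes too. -/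
theorem numerator_eq_zero {ω : E3} (hω : ‖ω‖ = 1) (N : E3 → ℝ) (σ : Metric.sphere (0 : E3) 1)
    (h : 1 - ⟪(σ : E3), ω⟫ = 0) : N σ - N ω = 0 := by
  have h1 := norm_sub_sq_height hω σ
  rw [h, mul_zero, sq_eq_zero_iff, norm_eq_zero, sub_eq_zero] at h1
  rw [h1, sub_self]

theorem continuous_restrict {N : E3 → ℝ} (hN : ContDiffOn ℝ 2 N {x : E3 | x ≠ 0}) :
    Continuous fun σ : Metric.sphere (0 : E3) 1 ↦ N σ :=
  hN.continuousOn.comp_continuous continuous_subtype_val fun σ ↦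
    Metric.ne_of_mem_sphere σ.2 one_ne_zero

/-- Since `‖σ - ω‖ = √2 * √(1 - ⟪σ, ω⟫)`, the Lipschitz bound dominates the quotient by a multiple
of `(1 - ⟪σ, ω⟫) ^ (-1/2)`, which is integrable. -/
theorem integrable_quotient {N : E3 → ℝ} (hN : ContDiffOn ℝ 2 N {x : E3 | x ≠ 0})
    {ω : E3} (hω : ‖ω‖ = 1) :
    Integrable (fun σ : Metric.sphere (0 : E3) 1 ↦
      (N σ - N ω) / (1 - ⟪(σ : E3), ω⟫)) sphereMeasure := by
  obtain ⟨C, hC, hL⟩ := lipschitz_at hN hω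
  refine ((integrable_rpow_height hω).const_mul (C * √2)).mono' ?_ (.of_forall fun σ ↦ ?_)
  · exact (((continuous_restrict hN).measurable.sub_const _).div
      (measurable_const.sub (continuous_height ω).measurable)).aestronglyMeasurable
  · have hv : 0 ≤ 1 - ⟪(σ : E3), ω⟫ := sub_nonneg.2 (height_mem hω σ).2
    have h1 : ‖(σ : E3) - ω‖ = √2 * √(1 - ⟪(σ : E3), ω⟫) := by
      rw [← Real.sqrt_mul two_pos.le, ← norm_sub_sq_height hω, Real.sqrt_sq (norm_nonneg _)]
    rcases hv.eq_or_lt with h0 | hpos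
    · rw [← h0]; simp
    · rw [norm_div, Real.norm_eq_abs, Real.norm_of_nonneg hv, div_le_iff₀ hpos, mul_assoc]
      have h2 : (1 - ⟪(σ : E3), ω⟫) ^ (-(1 / 2) : ℝ) * (1 - ⟪(σ : E3), ω⟫) =
          √(1 - ⟪(σ : E3), ω⟫) := by
        rw [← Real.rpow_add_one hpos.ne', Real.sqrt_eq_rpow]
        norm_num
      rw [h2, mul_assoc, ← h1]
      exact hL σ

/-! ### The expansion at the light cone -/

/-- leading-order expansion of the interior homogeneous solution
Ψ₁[N] towards the light cone (Section 2.1.3 of the paper): the limit as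
s → 1⁺ after subtracting the logarithmic term is the coefficient N₀(ω). -/
theorem interior_expansion_leading
    (N : E3 → ℝ) (hhom : HomogZero N)
    (hN : ContDiffOn ℝ 2 N {x : E3 | x ≠ 0})
    (ω : E3) (hω : ‖ω‖ = 1) :
    Integrable (fun σ : Metric.sphere (0 : E3) 1 =>
        (N σ - N ω) / (1 - ⟪(σ : E3), ω⟫)) sphereMeasure ∧
    Tendsto
      (fun s : ℝ =>
        (1 / (4 * π)) * sphereIntegral (fun σ => N σ / (s - ⟪σ, ω⟫)) -
          (N ω / 2) * Real.log ((s + 1) / (s - 1)))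
      (nhdsWithin 1 (Set.Ioi 1))
      (nhds ((1 / (4 * π)) *
        sphereIntegral (fun σ => (N σ - N ω) / (1 - ⟪σ, ω⟫)))) := by

  have hI := integrable_quotient hN hω
  refine ⟨hI, ?_⟩
  have hmeas (s : ℝ) : AEStronglyMeasurable (fun σ : Metric.sphere (0 : E3) 1 ↦
      (N σ - N ω) / (s - ⟪(σ : E3), ω⟫)) sphereMeasure :=
    (((continuous_restrict hN).measurable.sub_const _).div
      (measurable_const.sub (continuous_height ω).measurable)).aestronglyMeasurable
  have hbound (s : ℝ) (hs : 1 < s) (σ : Metric.sphere (0 : E3) 1) :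
      ‖(N σ - N ω) / (s - ⟪(σ : E3), ω⟫)‖ ≤ ‖(N σ - N ω) / (1 - ⟪(σ : E3), ω⟫)‖ := by
    have hv : 0 ≤ 1 - ⟪(σ : E3), ω⟫ := sub_nonneg.2 (height_mem hω σ).2
    rcases hv.eq_or_lt with h0 | hpos
    · simp [numerator_eq_zero hω N σ h0.symm]
    · have hv' : 0 ≤ s - ⟪(σ : E3), ω⟫ := by linarith
      rw [norm_div, norm_div, Real.norm_of_nonneg hv, Real.norm_of_nonneg hv']
      gcongr
  have hlim : Tendsto (fun s : ℝ ↦ ∫ σ : Metric.sphere (0 : E3) 1,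
      (N σ - N ω) / (s - ⟪(σ : E3), ω⟫) ∂sphereMeasure) (𝓝[>] 1)
      (𝓝 (∫ σ : Metric.sphere (0 : E3) 1,
        (N σ - N ω) / (1 - ⟪(σ : E3), ω⟫) ∂sphereMeasure)) := by
    refine tendsto_integral_filter_of_dominated_convergence _ (.of_forall hmeas)
      (eventually_mem_nhdsWithin.mono fun s hs ↦ .of_forall (hbound s hs)) hI.norm
      (.of_forall fun σ ↦ ?_)
    by_cases h0 : 1 - ⟪(σ : E3), ω⟫ = 0
    · simp [numerator_eq_zero hω N σ h0]
    · have hc : ContinuousAt (fun s : ℝ ↦ (N σ - N ω) / (s - ⟪(σ : E3), ω⟫)) 1 :=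
        continuousAt_const.div (continuousAt_id.sub continuousAt_const) h0
      exact hc.tendsto.mono_left nhdsWithin_le_nhds
  refine (hlim.const_mul (1 / (4 * π))).congr' ?_
  filter_upwards [self_mem_nhdsWithin] with s hs
  have hs : 1 < s := hs
  have hinv : Integrable (fun σ : Metric.sphere (0 : E3) 1 ↦ 1 / (s - ⟪(σ : E3), ω⟫))
      sphereMeasure := by
    -- A nonzero Bochner integral forces integrability.
    refine .of_integral_ne_zero ?_
    rw [integral_inv_height hω hs]
    have : 0 < Real.log ((s + 1) / (s - 1)) :=
      Real.log_pos ((one_lt_div (by linarith)).2 (by linarith))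
    positivity
  have hsplit : ∫ σ : Metric.sphere (0 : E3) 1, N σ / (s - ⟪(σ : E3), ω⟫) ∂sphereMeasure =
      (∫ σ : Metric.sphere (0 : E3) 1, (N σ - N ω) / (s - ⟪(σ : E3), ω⟫) ∂sphereMeasure) +
        N ω * (2 * π * Real.log ((s + 1) / (s - 1))) := by
    rw [← integral_inv_height hω hs, ← integral_const_mul,
      ← integral_add (hI.norm.mono' (hmeas s) (.of_forall (hbound s hs))) (hinv.const_mul _)]
    congr with σ
    ring
  simp only [sphereIntegral]
  rw [hsplit]
  field_simp
  ring
end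
end

section
/- Let ε > 0 and let n: ℝ×S² → ℝ be continuous with |n(q,σ)| ≤ C·(1+q²)^{−(1+ε)/2} for all (q,σ). Fix (t,x) ∈ ℝ×ℝ³ with 0 < |x| < t and write r = |x|, ω = x/|x|. For each a > 0 the integral Φ_a(t,x) = (a/4π) ∫_{a(r−t)}^∞ ∫_{S²} n(q,σ) / ( a(t−r) + q + a·r·(1 − ⟨ω,σ⟩) ) dS(σ) dq converges absolutely, and lim_{a→∞} Φ_a(t,x) = (1/4π)∫_{S²} N(σ)/(t − ⟨σ,x⟩) dS(σ), where N(σ) = ∫_ℝ n(q,σ) dq. -/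
/-!
With `δ = t - r > 0`, the kernel is `1 / (aδ + q + a r (1 - ⟨ω, σ⟩))`, and the integral over
`q > -aδ` is split at `q = -aδ/2`.

For `q > -aδ/2` the kernel times `a` is bounded by `2/δ`, so the integrable weight
`C (1 + q²) ^ (-(1+ε)/2)` dominates and the integral converges (`far_tendsto`) to
`∫∫ n(q, σ) / (δ + r (1 - ⟨ω, σ⟩))`; this is `4π Ψ₁[N]` by Fubini, because
`δ + r (1 - ⟨ω, σ⟩) = t - ⟨σ, x⟩`.

For `-aδ < q ≤ -aδ/2` the source is `O(a ^ (-1-ε))`, and it suffices that the integral of the kernel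
is bounded in `a` (`near_cone_bound`). Put `s = q + aδ` and choose a unit vector `e ⊥ ω`. Bessel's
inequality gives `1 - ⟨ω, σ⟩ ≥ ⟨e, σ⟩² / 2` (`sq_inner_le`), and weighted AM–GM bounds the kernel by a
constant times `s ^ (-3/4) (a r) ^ (-1/4) |⟨e, σ⟩| ^ (-1/2)` (`one_div_add_le`). Both factors are
integrable; for the angular one (`integrable_sphere_abs_inner_rpow`) polar coordinates reduce the
claim to the unit ball, and in an orthonormal basis starting with `e` to the local integrability of
`|s| ^ (-1/2)` on the line. After multiplication by `a` this part is `O(a ^ (-ε))`.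
-/

noncomputable section

open MeasureTheory Real Set Filter Topology Metric
open scoped RealInnerProductSpace Classical

/-! ### Integrability of an inverse power of a linear form on the sphere -/

instance instFiniteSphere : IsFiniteMeasure sphereMeasure := by
  unfold sphereMeasure; infer_instance

lemma exists_unit_orthogonal {ω : E3} (hω : ‖ω‖ = 1) :
    ∃ e : E3, ‖e‖ = 1 ∧ ⟪ω, e⟫ = 0 := by
  have hv : Orthonormal ℝ (({0} : Set (Fin 3)).domRestrict (fun _ => ω)) := by
    refine ⟨fun _ => hω, fun i j hij => ?_⟩
    exact (hij (Subsingleton.elim i j)).elim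
  obtain ⟨b, hb⟩ := hv.exists_orthonormalBasis_extension_of_card_eq (by simp)
  refine ⟨b 1, b.orthonormal.1 1, ?_⟩
  rw [← hb 0 (by simp)]
  exact b.orthonormal.2 (by decide)

/-- Bessel's inequality `⟨ω, σ⟩² + ⟨e, σ⟩² ≤ 1` combined with `1 + ⟨ω, σ⟩ ≤ 2`. -/
lemma sq_inner_le {ω e σ : E3} (hω : ‖ω‖ = 1) (he : ‖e‖ = 1) (hσ : ‖σ‖ = 1)
    (hωe : ⟪ω, e⟫ = 0) : ⟪e, σ⟫ ^ 2 / 2 ≤ 1 - ⟪ω, σ⟫ := by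
  have h1 : 0 ≤ ⟪σ - ⟪ω, σ⟫ • ω - ⟪e, σ⟫ • e, σ - ⟪ω, σ⟫ • ω - ⟪e, σ⟫ • e⟫ :=
    real_inner_self_nonneg
  have hωω : ⟪ω, ω⟫ = 1 := by rw [real_inner_self_eq_norm_sq, hω]; norm_num
  have hee : ⟪e, e⟫ = 1 := by rw [real_inner_self_eq_norm_sq, he]; norm_num
  have hss : ⟪σ, σ⟫ = 1 := by rw [real_inner_self_eq_norm_sq, hσ]; norm_num
  simp only [inner_sub_left, inner_sub_right, real_inner_smul_left, real_inner_smul_right, hωω, hee,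
    hss, real_inner_comm ω e, real_inner_comm ω σ, real_inner_comm e σ, hωe] at h1
  have h2 : ⟪ω, σ⟫ ≤ 1 := by
    have := real_inner_le_norm ω σ
    rwa [hω, hσ, one_mul] at this
  nlinarith [sq_nonneg (1 - ⟪ω, σ⟫)]

lemma integrable_abs_rpow_indicator :
    Integrable (fun s : ℝ => (Icc (-1) 1).indicator (fun s => |s| ^ (-(1 / 2) : ℝ)) s) := by
  have h0 : IntegrableOn (fun s : ℝ => s ^ (-(1 / 2) : ℝ)) (Ioc 0 1) := by
    rw [← intervalIntegrable_iff_integrableOn_Ioc_of_le zero_le_one]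
    exact intervalIntegral.intervalIntegrable_rpow' (by norm_num)
  have h1 : IntegrableOn (fun s : ℝ => |s| ^ (-(1 / 2) : ℝ)) (Icc 0 1) := by
    rw [integrableOn_Icc_iff_integrableOn_Ioc]
    exact h0.congr_fun (fun s hs => by simp only [abs_of_pos hs.1]) measurableSet_Ioc
  have h2 : IntegrableOn (fun s : ℝ => |s| ^ (-(1 / 2) : ℝ)) (Icc (-1) 0) := by
    have h := (IntegrableOn.comp_neg (μ := (volume : Measure ℝ)) h1)
    simpa using h
  rw [integrable_indicator_iff measurableSet_Icc]
  have := h2.union h1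
  rwa [Icc_union_Icc_eq_Icc (by norm_num) (by norm_num)] at this

/-- In an orthonormal basis starting with `e`, the integrand on the ball is dominated by a product of
functions of one coordinate each, supported in the cube `[-1, 1]³`. -/
lemma integrableOn_ball_abs_inner_rpow {e : E3} (he : ‖e‖ = 1) :
    IntegrableOn (fun y : E3 => |⟪e, y⟫| ^ (-(1 / 2) : ℝ)) (ball 0 1) := by
  have hv : Orthonormal ℝ (({0} : Set (Fin 3)).domRestrict (fun _ => e)) := by
    refine ⟨fun _ => he, fun i j hij => ?_⟩
    exact (hij (Subsingleton.elim i j)).elim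
  obtain ⟨b, hb⟩ := hv.exists_orthonormalBasis_extension_of_card_eq (by simp)
  have hb0 : b 0 = e := hb 0 (by simp)
  let f : Fin 3 → ℝ → ℝ := ![(Icc (-1) 1).indicator (fun s => |s| ^ (-(1 / 2) : ℝ)),
    (Icc (-1) 1).indicator 1, (Icc (-1) 1).indicator 1]
  have hone : Integrable ((Icc (-1 : ℝ) 1).indicator (1 : ℝ → ℝ)) := by
    rw [integrable_indicator_iff measurableSet_Icc]
    exact integrableOn_const (by simp)
  have hf : ∀ i, Integrable (f i) := by
    intro i
    fin_cases i
    exacts [integrable_abs_rpow_indicator, hone, hone]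
  have hprod : Integrable (fun z : Fin 3 → ℝ => ∏ i, f i (z i)) := Integrable.fintype_prod hf
  have hmp := (PiLp.volume_preserving_ofLp (Fin 3)).comp b.measurePreserving_repr
  have hcomp := hmp.integrable_comp_of_integrable hprod
  rw [← integrable_indicator_iff measurableSet_ball]
  refine hcomp.mono' ?_ (ae_of_all _ fun y => ?_)
  · refine (Measurable.indicator ?_ measurableSet_ball).aestronglyMeasurable
    fun_prop
  · have hcoord : ∀ i, y ∈ ball (0 : E3) 1 → b.repr y i ∈ Icc (-1 : ℝ) 1 := by
      intro i hy
      rw [b.repr_apply_apply, mem_Icc, ← abs_le]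
      refine (abs_real_inner_le_norm _ _).trans ?_
      rw [b.orthonormal.1 i, one_mul]
      exact (mem_ball_zero_iff.1 hy).le
    by_cases hy : y ∈ ball (0 : E3) 1
    · have h0 := hcoord 0 hy
      have h1 := hcoord 1 hy
      have h2 := hcoord 2 hy
      have : b.repr y 0 = ⟪e, y⟫ := by rw [b.repr_apply_apply, hb0]
      rw [this] at h0
      simp only [Fin.prod_univ_three, f, Function.comp, Matrix.cons_val_zero, Matrix.cons_val_one,
        Matrix.cons_val, indicator_of_mem hy, this, indicator_of_mem h0, indicator_of_mem h1,
        indicator_of_mem h2]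
      simp [abs_of_nonneg (Real.rpow_nonneg (abs_nonneg _) _)]
    · rw [indicator_of_notMem hy, norm_zero]
      refine Finset.prod_nonneg fun i _ => ?_
      have hnn : ∀ s : ℝ, 0 ≤ (Icc (-1 : ℝ) 1).indicator (1 : ℝ → ℝ) s :=
        indicator_nonneg fun _ _ => zero_le_one
      fin_cases i
      exacts [indicator_nonneg (f := fun s : ℝ => |s| ^ (-(1 / 2) : ℝ)) (fun _ _ => by positivity) _,
        hnn _, hnn _]

/-- Polar coordinates: `|⟨e, y/|y|⟩| ^ (-1/2) = |y| ^ (1/2) |⟨e, y⟩| ^ (-1/2)` is integrable on the unit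
ball, so by Fubini its restriction to almost every radius, hence to some radius, is integrable. -/
lemma integrable_sphere_abs_inner_rpow {e : E3} (he : ‖e‖ = 1) :
    Integrable (fun σ : sphere (0 : E3) 1 => |⟪e, (σ : E3)⟫| ^ (-(1 / 2) : ℝ)) sphereMeasure := by
  have hball := integrableOn_ball_abs_inner_rpow he
  rw [← integrable_indicator_iff measurableSet_ball] at hball
  have hsub : Integrable (fun y : ({0}ᶜ : Set E3) =>
      (ball (0 : E3) 1).indicator (fun y : E3 => |⟪e, y⟫| ^ (-(1 / 2) : ℝ)) y)
      (Measure.comap (↑) (volume : Measure E3)) := by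
    have := integrableOn_iff_comap_subtypeVal (μ := (volume : Measure E3))
      (f := (ball (0 : E3) 1).indicator fun y : E3 => |⟪e, y⟫| ^ (-(1 / 2) : ℝ))
      (measurableSet_singleton (0 : E3)).compl
    refine this.1 ?_
    exact hball.integrableOn
  let g : sphere (0 : E3) 1 × Ioi (0 : ℝ) → ℝ := fun p =>
    (Iio (⟨1, mem_Ioi.2 one_pos⟩ : Ioi (0 : ℝ))).indicator
      (fun _ => |⟪e, (p.1 : E3)⟫| ^ (-(1 / 2) : ℝ)) p.2
  have hgm : Measurable g := by
    have : g = (univ ×ˢ Iio (⟨1, mem_Ioi.2 one_pos⟩ : Ioi (0 : ℝ))).indicator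
      (fun p : sphere (0 : E3) 1 × Ioi (0 : ℝ) => |⟪e, (p.1 : E3)⟫| ^ (-(1 / 2) : ℝ)) := by
      ext p
      simp only [g, indicator, mem_prod, mem_univ, true_and]
    rw [this]
    refine Measurable.indicator ?_ (MeasurableSet.univ.prod measurableSet_Iio)
    fun_prop
  have hmp := (volume : Measure E3).measurePreserving_homeomorphUnitSphereProd
  have hg : Integrable g (sphereMeasure.prod (Measure.volumeIoiPow (Module.finrank ℝ E3 - 1))) := by
    have := hmp.integrable_comp_emb (homeomorphUnitSphereProd E3).measurableEmbedding (g := g)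
    refine this.1 (hsub.mono' (hgm.comp (homeomorphUnitSphereProd E3).measurable).aestronglyMeasurable
      (ae_of_all _ fun y => ?_))
    have hy0 : 0 < ‖(y : E3)‖ := norm_pos_iff.2 y.2
    by_cases hy : ‖(y : E3)‖ < 1
    · have h1 : (homeomorphUnitSphereProd E3 y).2 ∈ Iio (⟨1, mem_Ioi.2 one_pos⟩ : Ioi (0 : ℝ)) := by
        rw [mem_Iio, ← Subtype.coe_lt_coe]; simpa using hy
      simp only [g, Function.comp, indicator_of_mem h1,
        indicator_of_mem (mem_ball_zero_iff.2 hy), homeomorphUnitSphereProd_apply_fst_coe,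
        real_inner_smul_right, abs_mul]
      rw [Real.norm_of_nonneg (by positivity), Real.mul_rpow (by positivity) (by positivity),
        abs_of_pos (inv_pos.2 hy0)]
      refine mul_le_of_le_one_left (by positivity) ?_
      rw [Real.inv_rpow hy0.le, Real.rpow_neg hy0.le, inv_inv]
      exact Real.rpow_le_one hy0.le hy.le (by norm_num)
    · have h1 : (homeomorphUnitSphereProd E3 y).2 ∉ Iio (⟨1, mem_Ioi.2 one_pos⟩ : Ioi (0 : ℝ)) := by
        rw [mem_Iio, ← Subtype.coe_lt_coe]; simpa using hy
      simp only [g, Function.comp, indicator_of_notMem h1, norm_zero]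
      exact indicator_nonneg (fun _ _ => by positivity) _
  have hae := hg.prod_left_ae
  obtain ⟨ρ, hρ, hρ1⟩ : ∃ ρ : Ioi (0 : ℝ), Integrable (fun σ => g (σ, ρ)) sphereMeasure ∧
      ρ ∈ Iio (⟨1, mem_Ioi.2 one_pos⟩ : Ioi (0 : ℝ)) := by
    by_contra! hcon
    have hz : Measure.volumeIoiPow (Module.finrank ℝ E3 - 1)
        (Iio (⟨1, mem_Ioi.2 one_pos⟩ : Ioi (0 : ℝ))) = 0 :=
      measure_mono_null (fun ρ h1 h2 => hcon ρ h2 h1) hae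
    rw [Measure.volumeIoiPow_apply_Iio, ENNReal.ofReal_eq_zero] at hz
    norm_num at hz
  simpa only [g, indicator_of_mem hρ1] using hρ

open scoped Pointwise in
/-- The cone over the great circle `⟨e, σ⟩ = 0` lies in a hyperplane, which is Lebesgue null. -/
lemma ae_inner_ne_zero {e : E3} (he : ‖e‖ = 1) :
    ∀ᵐ σ : sphere (0 : E3) 1 ∂sphereMeasure, ⟪e, (σ : E3)⟫ ≠ 0 := by
  have hm : MeasurableSet {σ : sphere (0 : E3) 1 | ⟪e, (σ : E3)⟫ = 0} :=
    measurableSet_eq_fun (by fun_prop) (by fun_prop)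
  have hker : (volume : Measure E3) (LinearMap.ker (innerSL ℝ e).toLinearMap) = 0 := by
    refine Measure.addHaar_submodule _ _ fun htop => ?_
    have : e ∈ LinearMap.ker (innerSL ℝ e).toLinearMap := by rw [htop]; trivial
    simp only [LinearMap.mem_ker, ContinuousLinearMap.coe_coe, innerSL_apply_apply,
      inner_self_eq_zero] at this
    simp [this] at he
  rw [ae_iff]
  simp only [not_not]
  rw [sphereMeasure, Measure.toSphere_apply' _ hm]
  refine mul_eq_zero_of_right _ (measure_mono_null ?_ hker)
  rintro _ ⟨s, -, _, ⟨σ, hσ, rfl⟩, rfl⟩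
  have hσ' : ⟪e, (σ : E3)⟫ = 0 := hσ
  simp [hσ']

/-! ### Pointwise bound on the kernel near the cone -/

/-- The weighted AM–GM bound `s ^ (3/4) * X ^ (1/4) ≤ s + X` with `X = b * d ^ 2 / 2 ≤ b * u` separates
the variables in the kernel `1 / (s + b * u)`. The case `d = 0` is excluded because there
`|d| ^ (-1/2)` takes the junk value `0`. -/
lemma one_div_add_le {s b u d : ℝ} (hs : 0 < s) (hb : 0 < b) (hd : d ≠ 0) (hu : d ^ 2 / 2 ≤ u) :
    1 / (s + b * u) ≤
      s ^ (-(3 / 4) : ℝ) * ((b / 2) ^ (-(1 / 4) : ℝ) * |d| ^ (-(1 / 2) : ℝ)) := by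
  have hd2 : 0 < |d| := abs_pos.2 hd
  set X : ℝ := b / 2 * |d| ^ 2 with hX
  have hXpos : 0 < X := by positivity
  have hXu : X ≤ b * u := by
    rw [hX, sq_abs]
    nlinarith
  have hsum : 0 < s + b * u := by linarith
  have h1 : s ^ (3 / 4 : ℝ) * X ^ (1 / 4 : ℝ) ≤ s + b * u := by
    calc s ^ (3 / 4 : ℝ) * X ^ (1 / 4 : ℝ)
        ≤ (s + b * u) ^ (3 / 4 : ℝ) * (s + b * u) ^ (1 / 4 : ℝ) := by
          gcongr <;> linarith
      _ = s + b * u := by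
          rw [← Real.rpow_add hsum]
          norm_num
  have h2 : s ^ (-(3 / 4) : ℝ) * ((b / 2) ^ (-(1 / 4) : ℝ) * |d| ^ (-(1 / 2) : ℝ)) =
      1 / (s ^ (3 / 4 : ℝ) * X ^ (1 / 4 : ℝ)) := by
    have hdd : (|d| ^ 2) ^ (1 / 4 : ℝ) = |d| ^ (1 / 2 : ℝ) := by
      rw [← Real.rpow_natCast, ← Real.rpow_mul hd2.le]
      norm_num
    rw [hX, Real.mul_rpow (by positivity) (by positivity), hdd, Real.rpow_neg hs.le,
      Real.rpow_neg (by positivity), Real.rpow_neg hd2.le]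
    field_simp
  rw [h2]
  exact one_div_le_one_div_of_le (by positivity) h1

/-! ### The two parts of the source integral -/

section Source

variable {m : ℝ → sphere (0 : E3) 1 → ℝ} {C ε δ r : ℝ} {ω : E3}

lemma one_sub_inner_nonneg (hω : ‖ω‖ = 1) (σ : sphere (0 : E3) 1) :
    0 ≤ 1 - ⟪ω, (σ : E3)⟫ := by
  have := real_inner_le_norm ω (σ : E3)
  rw [hω, norm_eq_of_mem_sphere σ] at this
  linarith

lemma measurable_kernel (hm : Continuous fun p : ℝ × sphere (0 : E3) 1 => m p.1 p.2) (a : ℝ) :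
    Measurable fun p : ℝ × sphere (0 : E3) 1 =>
      m p.1 p.2 / (a * δ + p.1 + a * r * (1 - ⟪ω, (p.2 : E3)⟫)) := by
  refine hm.measurable.div (Continuous.measurable ?_)
  fun_prop

/-- The part `-aδ < q ≤ -aδ/2` of the source, where the denominator may vanish in the limit
`q → -aδ`, `σ → ω`. There `|q|` is of size `a`, so `|n| = O(a ^ (-(1 + ε)))`, while the integral of
the kernel is bounded uniformly in `a`: the separated bound of `one_div_add_le` integrates to a
multiple of
`(aδ) ^ (1/4) * (ar) ^ (-1/4) = (δ/r) ^ (1/4)`. -/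
lemma near_cone_bound (hm : Continuous fun p : ℝ × sphere (0 : E3) 1 => m p.1 p.2) (hε : 0 < ε)
    (hdec : ∀ q σ, |m q σ| ≤ C * (1 + q ^ 2) ^ (-(1 + ε) / 2)) (hC : 0 ≤ C) (hδ : 0 < δ)
    (hr : 0 < r) (hω : ‖ω‖ = 1) : ∃ K : ℝ, ∀ a : ℝ, 0 < a →
      IntegrableOn (fun p : ℝ × sphere (0 : E3) 1 =>
        m p.1 p.2 / (a * δ + p.1 + a * r * (1 - ⟪ω, (p.2 : E3)⟫)))
        (Ioc (-(a * δ)) (-(a * δ / 2)) ×ˢ univ) ((volume : Measure ℝ).prod sphereMeasure) ∧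
      ‖∫ p in Ioc (-(a * δ)) (-(a * δ / 2)) ×ˢ univ,
        m p.1 p.2 / (a * δ + p.1 + a * r * (1 - ⟪ω, (p.2 : E3)⟫))
          ∂(volume : Measure ℝ).prod sphereMeasure‖ ≤ K * a ^ (-(1 + ε)) := by
  obtain ⟨e, he, hωe⟩ := exists_unit_orthogonal hω
  set k : sphere (0 : E3) 1 → ℝ := fun σ => |⟪e, (σ : E3)⟫| ^ (-(1 / 2) : ℝ) with hk
  have hkint : Integrable k sphereMeasure := integrable_sphere_abs_inner_rpow he
  refine ⟨C * (δ / 2) ^ (-(1 + ε)) * (4 * (δ / r) ^ (1 / 4 : ℝ) * ∫ σ, k σ ∂sphereMeasure),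
    fun a ha => ?_⟩
  set M : ℝ := C * (a * δ / 2) ^ (-(1 + ε)) with hM
  have haδ : 0 < a * δ / 2 := by positivity
  have hMnn : 0 ≤ M := by positivity
  set f : ℝ → ℝ := fun q => M * (q + a * δ) ^ (-(3 / 4) : ℝ) with hf
  set g : sphere (0 : E3) 1 → ℝ := fun σ => (a * r / 2) ^ (-(1 / 4) : ℝ) * k σ with hg
  have hle : -(a * δ) ≤ -(a * δ / 2) := by linarith
  have hpow : IntervalIntegrable (fun s : ℝ => s ^ (-(3 / 4) : ℝ)) volume 0 (a * δ / 2) :=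
    intervalIntegral.intervalIntegrable_rpow' (by norm_num)
  have hfint : IntegrableOn f (Ioc (-(a * δ)) (-(a * δ / 2))) := by
    rw [← intervalIntegrable_iff_integrableOn_Ioc_of_le hle]
    have := (hpow.comp_add_right (a * δ)).const_mul M
    convert this using 1 <;> ring
  have hfval : ∫ q in Ioc (-(a * δ)) (-(a * δ / 2)), f q = M * (4 * (a * δ / 2) ^ (1 / 4 : ℝ)) := by
    rw [← intervalIntegral.integral_of_le hle, hf, intervalIntegral.integral_const_mul,
      intervalIntegral.integral_comp_add_right (fun s : ℝ => s ^ (-(3 / 4) : ℝ)),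
      integral_rpow (Or.inl (by norm_num))]
    have h1 : -(a * δ) + a * δ = 0 := by ring
    have h2 : -(a * δ / 2) + a * δ = a * δ / 2 := by ring
    rw [h1, h2, Real.zero_rpow (by norm_num)]
    norm_num
    ring_nf
    simp
  have hgint : Integrable g sphereMeasure := hkint.const_mul _
  have hfg : IntegrableOn (fun p : ℝ × sphere (0 : E3) 1 => f p.1 * g p.2)
      (Ioc (-(a * δ)) (-(a * δ / 2)) ×ˢ univ) ((volume : Measure ℝ).prod sphereMeasure) := by
    rw [IntegrableOn, ← Measure.prod_restrict, Measure.restrict_univ]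
    exact Integrable.mul_prod hfint hgint
  have hmeas : MeasurableSet (Ioc (-(a * δ)) (-(a * δ / 2)) ×ˢ (univ : Set (sphere (0 : E3) 1))) :=
    measurableSet_Ioc.prod MeasurableSet.univ
  have hbd : ∀ᵐ p ∂((volume : Measure ℝ).prod sphereMeasure).restrict
      (Ioc (-(a * δ)) (-(a * δ / 2)) ×ˢ univ),
      ‖m p.1 p.2 / (a * δ + p.1 + a * r * (1 - ⟪ω, (p.2 : E3)⟫))‖ ≤ f p.1 * g p.2 := by
    rw [ae_restrict_iff' hmeas]
    have hae : ∀ᵐ p ∂(volume : Measure ℝ).prod sphereMeasure, ⟪e, (p.2 : E3)⟫ ≠ 0 :=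
      Measure.quasiMeasurePreserving_snd.ae (ae_inner_ne_zero he)
    filter_upwards [hae] with p hp hpm
    obtain ⟨⟨hq1, hq2⟩, -⟩ := hpm
    have hs : 0 < p.1 + a * δ := by linarith
    have hu := one_sub_inner_nonneg hω p.2
    have hkey := one_div_add_le hs (mul_pos ha hr) hp
      (sq_inner_le hω he (norm_eq_of_mem_sphere p.2) hωe)
    have hden : 0 < p.1 + a * δ + a * r * (1 - ⟪ω, (p.2 : E3)⟫) := by positivity
    have hmM : |m p.1 p.2| ≤ M := by
      refine (hdec _ _).trans ?_
      rw [hM]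
      refine mul_le_mul_of_nonneg_left ?_ hC
      calc (1 + p.1 ^ 2) ^ (-(1 + ε) / 2) ≤ ((a * δ / 2) ^ 2) ^ (-(1 + ε) / 2) :=
            Real.rpow_le_rpow_of_nonpos (by positivity) (by nlinarith) (by linarith)
        _ = (a * δ / 2) ^ (-(1 + ε)) := by
            rw [← Real.rpow_natCast, ← Real.rpow_mul haδ.le]
            congr 1
            push_cast
            ring
    rw [norm_div, Real.norm_eq_abs, Real.norm_eq_abs, add_comm (a * δ), abs_of_pos hden,
      div_eq_mul_one_div]
    calc |m p.1 p.2| * (1 / (p.1 + a * δ + a * r * (1 - ⟪ω, (p.2 : E3)⟫)))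
        ≤ M * ((p.1 + a * δ) ^ (-(3 / 4) : ℝ) *
          ((a * r / 2) ^ (-(1 / 4) : ℝ) * |⟪e, (p.2 : E3)⟫| ^ (-(1 / 2) : ℝ))) := by gcongr
      _ = f p.1 * g p.2 := by simp only [hf, hg, hk]; ring
  refine ⟨hfg.mono' (measurable_kernel hm a).aestronglyMeasurable hbd, ?_⟩
  refine (norm_integral_le_of_norm_le hfg hbd).trans (le_of_eq ?_)
  rw [← Measure.prod_restrict, Measure.restrict_univ, integral_prod_mul, hfval, hg,
    integral_const_mul, hM]
  have h1 : (a * δ / 2) ^ (-(1 + ε)) = (δ / 2) ^ (-(1 + ε)) * a ^ (-(1 + ε)) := by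
    rw [← Real.mul_rpow (by positivity) ha.le]
    ring_nf
  have h2 : (a * δ / 2) ^ (1 / 4 : ℝ) * (a * r / 2) ^ (-(1 / 4) : ℝ) = (δ / r) ^ (1 / 4 : ℝ) := by
    rw [Real.rpow_neg (by positivity), ← div_eq_mul_inv, ← Real.div_rpow (by positivity)
      (by positivity)]
    congr 1
    field_simp
  rw [h1, ← h2]
  ring

lemma integrable_weight (hε : 0 < ε) :
    Integrable (fun p : ℝ × sphere (0 : E3) 1 => C * (1 + p.1 ^ 2) ^ (-(1 + ε) / 2))
      ((volume : Measure ℝ).prod sphereMeasure) := by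
  have h : Integrable (fun q : ℝ => C * (1 + q ^ 2) ^ (-(1 + ε) / 2)) := by
    have := (integrable_rpow_neg_one_add_norm_sq (E := ℝ) (μ := volume) (r := 1 + ε)
      (by simpa using hε)).const_mul C
    simpa using this
  exact h.comp_fst sphereMeasure

/-- For `q > -aδ/2` the denominator is at least `aδ/2`; this gives a majorant independent of `a`. -/
lemma far_norm_le (hdec : ∀ q σ, |m q σ| ≤ C * (1 + q ^ 2) ^ (-(1 + ε) / 2)) (hδ : 0 < δ)
    (hr : 0 < r) (hω : ‖ω‖ = 1) {a : ℝ} (ha : 0 < a) (p : ℝ × sphere (0 : E3) 1)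
    (hp : -(a * δ / 2) < p.1) :
    ‖a * (m p.1 p.2 / (a * δ + p.1 + a * r * (1 - ⟪ω, (p.2 : E3)⟫)))‖ ≤
      2 / δ * (C * (1 + p.1 ^ 2) ^ (-(1 + ε) / 2)) := by
  have hu := one_sub_inner_nonneg hω p.2
  have haδ : 0 < a * δ / 2 := by positivity
  have hden : a * δ / 2 ≤ a * δ + p.1 + a * r * (1 - ⟪ω, (p.2 : E3)⟫) := by
    have : 0 ≤ a * r * (1 - ⟪ω, (p.2 : E3)⟫) := by positivity
    linarith
  rw [norm_mul, norm_div, Real.norm_of_nonneg ha.le, Real.norm_eq_abs,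
    Real.norm_of_nonneg (haδ.le.trans hden)]
  calc a * (|m p.1 p.2| / (a * δ + p.1 + a * r * (1 - ⟪ω, (p.2 : E3)⟫)))
      ≤ a * ((C * (1 + p.1 ^ 2) ^ (-(1 + ε) / 2)) / (a * δ / 2)) := by
        have h0 := (abs_nonneg _).trans (hdec p.1 p.2)
        have h1 := hdec p.1 p.2
        gcongr
    _ = 2 / δ * (C * (1 + p.1 ^ 2) ^ (-(1 + ε) / 2)) := by field_simp

lemma far_integrableOn (hm : Continuous fun p : ℝ × sphere (0 : E3) 1 => m p.1 p.2) (hε : 0 < ε)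
    (hdec : ∀ q σ, |m q σ| ≤ C * (1 + q ^ 2) ^ (-(1 + ε) / 2)) (hδ : 0 < δ)
    (hr : 0 < r) (hω : ‖ω‖ = 1) {a : ℝ} (ha : 0 < a) :
    IntegrableOn (fun p : ℝ × sphere (0 : E3) 1 =>
      m p.1 p.2 / (a * δ + p.1 + a * r * (1 - ⟪ω, (p.2 : E3)⟫)))
      (Ioi (-(a * δ / 2)) ×ˢ univ) ((volume : Measure ℝ).prod sphereMeasure) := by
  have h : IntegrableOn (fun p : ℝ × sphere (0 : E3) 1 =>
      a * (m p.1 p.2 / (a * δ + p.1 + a * r * (1 - ⟪ω, (p.2 : E3)⟫))))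
      (Ioi (-(a * δ / 2)) ×ˢ univ) ((volume : Measure ℝ).prod sphereMeasure) := by
    refine ((integrable_weight (C := C) hε).const_mul (2 / δ)).integrableOn.mono'
      ((measurable_kernel hm a).const_mul a).aestronglyMeasurable ?_
    refine (ae_restrict_iff' (measurableSet_Ioi.prod MeasurableSet.univ)).2 (ae_of_all _ ?_)
    exact fun p hp => far_norm_le hdec hδ hr hω ha p hp.1
  refine IntegrableOn.congr_fun (h.const_mul a⁻¹) (fun p _ => ?_)
    (measurableSet_Ioi.prod MeasurableSet.univ)
  exact inv_mul_cancel_left₀ ha.ne' _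

/-- Dominated convergence on `q > -aδ/2`: the domain exhausts `ℝ × S²`, and `a` times the kernel tends
to `1 / (δ + r (1 - ⟨ω, σ⟩))` for each fixed `q`. -/
lemma far_tendsto (hm : Continuous fun p : ℝ × sphere (0 : E3) 1 => m p.1 p.2) (hε : 0 < ε)
    (hdec : ∀ q σ, |m q σ| ≤ C * (1 + q ^ 2) ^ (-(1 + ε) / 2)) (hδ : 0 < δ)
    (hr : 0 < r) (hω : ‖ω‖ = 1) :
    Tendsto (fun a : ℝ => a * ∫ p in Ioi (-(a * δ / 2)) ×ˢ univ,
        m p.1 p.2 / (a * δ + p.1 + a * r * (1 - ⟪ω, (p.2 : E3)⟫))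
          ∂(volume : Measure ℝ).prod sphereMeasure) atTop
      (𝓝 (∫ p, m p.1 p.2 / (δ + r * (1 - ⟪ω, (p.2 : E3)⟫))
          ∂(volume : Measure ℝ).prod sphereMeasure)) := by
  have hset : ∀ a : ℝ, MeasurableSet (Ioi (-(a * δ / 2)) ×ˢ (univ : Set (sphere (0 : E3) 1))) :=
    fun a => measurableSet_Ioi.prod MeasurableSet.univ
  simp_rw [← integral_const_mul, ← integral_indicator (hset _)]
  refine tendsto_integral_filter_of_dominated_convergence
    (fun p => 2 / δ * (C * (1 + p.1 ^ 2) ^ (-(1 + ε) / 2))) ?_ ?_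
    ((integrable_weight (C := C) hε).const_mul (2 / δ)) ?_
  · exact Eventually.of_forall fun a =>
      (((measurable_kernel hm a).const_mul a).indicator (hset a)).aestronglyMeasurable
  · filter_upwards [eventually_gt_atTop 0] with a ha
    refine ae_of_all _ fun p => ?_
    by_cases hp : p ∈ Ioi (-(a * δ / 2)) ×ˢ (univ : Set (sphere (0 : E3) 1))
    · rw [indicator_of_mem hp]
      exact far_norm_le hdec hδ hr hω ha p hp.1
    · rw [indicator_of_notMem hp, norm_zero]
      exact mul_nonneg (by positivity) ((abs_nonneg _).trans (hdec p.1 p.2))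
  · refine ae_of_all _ fun p => ?_
    have hu := one_sub_inner_nonneg hω p.2
    have hlim : Tendsto (fun a : ℝ => m p.1 p.2 / (δ + p.1 / a + r * (1 - ⟪ω, (p.2 : E3)⟫))) atTop
        (𝓝 (m p.1 p.2 / (δ + 0 + r * (1 - ⟪ω, (p.2 : E3)⟫)))) := by
      refine tendsto_const_nhds.div ((tendsto_const_nhds.add ?_).add_const _) (by positivity)
      exact tendsto_const_nhds.div_atTop tendsto_id
    rw [add_zero] at hlim
    refine hlim.congr' ?_
    filter_upwards [eventually_gt_atTop 0, eventually_gt_atTop (-(2 * p.1 / δ))] with a ha ha2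
    have hp : p ∈ Ioi (-(a * δ / 2)) ×ˢ (univ : Set (sphere (0 : E3) 1)) := by
      refine ⟨?_, mem_univ _⟩
      rw [mem_Ioi]
      rw [neg_lt, lt_div_iff₀ hδ] at ha2
      linarith
    rw [indicator_of_mem hp]
    have hfac : a * δ + p.1 + a * r * (1 - ⟪ω, (p.2 : E3)⟫) =
        a * (δ + p.1 / a + r * (1 - ⟪ω, (p.2 : E3)⟫)) := by field_simp
    rw [hfac, ← mul_div_assoc, mul_div_mul_left _ _ ha.ne']

end Source

/-! ### The limit in the interior of the light cone -/

/-- the scaled forward solution converges in the interior of the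
light cone to the homogeneous degree −1 asymptotics Ψ₁[N]
(Section 2.1.1 of the paper). -/
theorem forward_solution_interior_asymptotics
    (ε : ℝ) (hε : 0 < ε)
    (n : ℝ → E3 → ℝ) (hhom : ∀ q : ℝ, HomogZero (n q))
    (hcont : ContinuousOn (fun p : ℝ × E3 => n p.1 p.2) {p : ℝ × E3 | p.2 ≠ 0})
    (C : ℝ)
    (hdec : ∀ (q : ℝ) (σ : E3), ‖σ‖ = 1 → |n q σ| ≤ C * (1 + q ^ 2) ^ (-(1 + ε) / 2))
    (N : E3 → ℝ) (hN : ∀ σ : E3, N σ = ∫ q : ℝ, n q σ)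
    (t : ℝ) (x : E3) (hx : 0 < ‖x‖) (hxt : ‖x‖ < t)
    (r : ℝ) (hr : r = ‖x‖) (ω : E3) (hω : ω = ‖x‖⁻¹ • x) :
    (∀ a : ℝ, 0 < a →
      IntegrableOn
        (fun p : ℝ × Metric.sphere (0 : E3) 1 =>
          n p.1 p.2 / (a * (t - r) + p.1 + a * r * (1 - ⟪ω, (p.2 : E3)⟫)))
        (Set.Ioi (a * (r - t)) ×ˢ Set.univ) ((volume : Measure ℝ).prod sphereMeasure)) ∧
    Tendsto
      (fun a : ℝ =>
        (a / (4 * π)) *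
          ∫ q in Set.Ioi (a * (r - t)),
            ∫ σ : Metric.sphere (0 : E3) 1,
              n q σ / (a * (t - r) + q + a * r * (1 - ⟪ω, (σ : E3)⟫)) ∂sphereMeasure)
      atTop
      (nhds ((1 / (4 * π)) * sphereIntegral (fun σ => N σ / (t - ⟪σ, x⟫)))) := by
  subst hr hω
  have hδ : 0 < t - ‖x‖ := by linarith
  have hω : ‖‖x‖⁻¹ • x‖ = 1 := by
    rw [norm_smul, norm_inv, norm_norm, inv_mul_cancel₀ hx.ne']
  set m : ℝ → sphere (0 : E3) 1 → ℝ := fun q σ => n q σ with hmdef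
  have hm : Continuous fun p : ℝ × sphere (0 : E3) 1 => m p.1 p.2 :=
    hcont.comp_continuous (f := fun p : ℝ × sphere (0 : E3) 1 => (p.1, (p.2 : E3))) (by fun_prop)
      fun p => ne_zero_of_mem_unit_sphere p.2
  have hmdec : ∀ q σ, |m q σ| ≤ C * (1 + q ^ 2) ^ (-(1 + ε) / 2) := fun q σ =>
    hdec q σ (norm_eq_of_mem_sphere σ)
  have hC : 0 ≤ C := by
    have h := (abs_nonneg _).trans (hdec 0 (‖x‖⁻¹ • x) hω)
    simpa using h
  obtain ⟨K, hK⟩ := near_cone_bound hm hε hmdec hC hδ hx hω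
  have hsplit : ∀ a : ℝ, 0 < a → Ioi (a * (‖x‖ - t)) ×ˢ (univ : Set (sphere (0 : E3) 1)) =
      Ioc (-(a * (t - ‖x‖))) (-(a * (t - ‖x‖) / 2)) ×ˢ univ ∪
        Ioi (-(a * (t - ‖x‖) / 2)) ×ˢ univ := by
    intro a ha
    rw [← union_prod, Ioc_union_Ioi_eq_Ioi (by nlinarith)]
    congr 2
    ring
  have hFint : ∀ a : ℝ, 0 < a →
      IntegrableOn
        (fun p : ℝ × Metric.sphere (0 : E3) 1 =>
          m p.1 p.2 / (a * (t - ‖x‖) + p.1 + a * ‖x‖ * (1 - ⟪‖x‖⁻¹ • x, (p.2 : E3)⟫)))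
        (Set.Ioi (a * (‖x‖ - t)) ×ˢ Set.univ) ((volume : Measure ℝ).prod sphereMeasure) := by
    intro a ha
    rw [hsplit a ha]
    exact (hK a ha).1.union (far_integrableOn hm hε hmdec hδ hx hω ha)
  refine ⟨hFint, ?_⟩
  have hnear : Tendsto (fun a : ℝ => a * ∫ p in
      Ioc (-(a * (t - ‖x‖))) (-(a * (t - ‖x‖) / 2)) ×ˢ univ,
        m p.1 p.2 / (a * (t - ‖x‖) + p.1 + a * ‖x‖ * (1 - ⟪‖x‖⁻¹ • x, (p.2 : E3)⟫))
          ∂(volume : Measure ℝ).prod sphereMeasure) atTop (𝓝 0) := by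
    have h0 : Tendsto (fun a : ℝ => K * a ^ (-ε)) atTop (𝓝 0) := by
      simpa using (tendsto_rpow_neg_atTop hε).const_mul K
    refine squeeze_zero_norm' ?_ h0
    filter_upwards [eventually_gt_atTop 0] with a ha
    rw [norm_mul, Real.norm_of_nonneg ha.le]
    refine (mul_le_mul_of_nonneg_left (hK a ha).2 ha.le).trans (le_of_eq ?_)
    rw [mul_left_comm]
    congr 1
    nth_rewrite 1 [← Real.rpow_one a]
    rw [← Real.rpow_add ha]
    congr 1
    ring
  have hfar := far_tendsto hm hε hmdec hδ hx hω
  have hlim := (hnear.add hfar).const_mul (1 / (4 * π))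
  rw [zero_add] at hlim
  -- The homogeneous limit kernel on the product space is the iterated integral defining `Ψ₁[N]`.
  have hden : ∀ σ : sphere (0 : E3) 1,
      t - ‖x‖ + ‖x‖ * (1 - ⟪‖x‖⁻¹ • x, (σ : E3)⟫) = t - ⟪(σ : E3), x⟫ := by
    intro σ
    rw [real_inner_smul_left, real_inner_comm (σ : E3) x]
    field_simp
    ring
  have hlimint : Integrable (fun p : ℝ × sphere (0 : E3) 1 =>
      m p.1 p.2 / (t - ‖x‖ + ‖x‖ * (1 - ⟪‖x‖⁻¹ • x, (p.2 : E3)⟫)))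
      ((volume : Measure ℝ).prod sphereMeasure) := by
    refine ((integrable_weight (C := C) hε).const_mul (1 / (t - ‖x‖))).mono'
      (hm.measurable.div (Continuous.measurable (by fun_prop))).aestronglyMeasurable
      (ae_of_all _ fun p => ?_)
    have hu := one_sub_inner_nonneg hω p.2
    have h1 := hmdec p.1 p.2
    have h0 := (abs_nonneg _).trans h1
    rw [norm_div, Real.norm_eq_abs, Real.norm_of_nonneg (by positivity), one_div_mul_eq_div]
    gcongr
    exact le_add_of_nonneg_right (by positivity)
  have hswap : ∫ p, m p.1 p.2 / (t - ‖x‖ + ‖x‖ * (1 - ⟪‖x‖⁻¹ • x, (p.2 : E3)⟫))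
      ∂(volume : Measure ℝ).prod sphereMeasure =
      sphereIntegral (fun σ => N σ / (t - ⟪σ, x⟫)) := by
    rw [integral_prod_symm _ hlimint, sphereIntegral]
    refine integral_congr_ae (ae_of_all _ fun σ => ?_)
    simp only [hden, hN, integral_div, hmdef]
  rw [hswap] at hlim
  refine hlim.congr' ?_
  filter_upwards [eventually_gt_atTop 0] with a ha
  have hF := setIntegral_prod _ (hFint a ha)
  simp only [Measure.restrict_univ] at hF
  rw [hmdef] at hF
  rw [← hF, hsplit a ha, setIntegral_union ?_ (measurableSet_Ioi.prod MeasurableSet.univ)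
    (hK a ha).1 (far_integrableOn hm hε hmdec hδ hx hω ha)]
  · ring
  · exact Disjoint.set_prod_left (Ioc_disjoint_Ioi le_rfl) _ _
end
end
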